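/- arXiv:1405.1702 — 2 statements merged into one kernel-verified Lean document; each statement's English description precedes it below -/
import Mathlib

section
/- Let (G_n) be a sequence of connected d-regular simple graphs on n vertices with d = d(n) → ∞ and ε = ε(n) ∈ (0,1), satisfying properties P1, P2 and P3. Then there exist a constant C and n₀ such that for all n ≥ n₀, every vertex v, every nonempty subset C' of the neighbourhood N(v), and every starting vertex u ∈ C', the expected number of visits to C' within the mixing time satisfies |R_{C'} − 2| ≤ C/d, where R_{C'} = Σ_{k=0}^{T} Pr(W_u(k) ∈ C') for the lazy walk W_u started at u. -/
open Finset Filter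

noncomputable section
open scoped Classical

variable {V : Type*} [Fintype V] [DecidableEq V]

/-- Transition matrix of the simple random walk on a `d`-regular graph `G`:
from `u` the walk moves to a uniformly random neighbour. -/
def simpleStep (G : SimpleGraph V) (d : ℕ) : Matrix V V ℝ :=
  Matrix.of fun u v => if G.Adj u v then ((d : ℝ))⁻¹ else 0

/-- Transition matrix of the lazy random walk `M = (1/2)(I + A/d)`. -/
def lazyStep (G : SimpleGraph V) (d : ℕ) : Matrix V V ℝ :=
  Matrix.of fun u v =>
    (if u = v then (2 : ℝ)⁻¹ else 0) + (2 : ℝ)⁻¹ * (if G.Adj u v then ((d : ℝ))⁻¹ else 0)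

/-- Probability that the first `t` steps of the Markov chain with transition
matrix `M` started at `u` form a trajectory satisfying `E`:  the sum, over all
paths realizing the event, of the product of the transition probabilities. -/
def walkProb (M : Matrix V V ℝ) (u : V) (t : ℕ)
    (E : (Fin (t + 1) → V) → Prop) : ℝ :=
  ∑ p : Fin (t + 1) → V,
    if p 0 = u ∧ E p then ∏ i : Fin t, M (p i.castSucc) (p i.succ) else 0

/-- The mixing time `T = min { t ≥ 1 : |M^t x y - 1/n| ≤ n⁻³ for all x,y }`. -/
def mixingTime (G : SimpleGraph V) (d : ℕ) : ℕ :=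
  sInf {T : ℕ | 1 ≤ T ∧ ∀ x y : V,
    |((lazyStep G d) ^ T) x y - ((Fintype.card V : ℝ))⁻¹| ≤ (((Fintype.card V : ℝ)) ^ 3)⁻¹}

/-- Property P1: the second largest eigenvalue of the lazy walk matrix is at
most `1 - g`, stated via the Rayleigh quotient on the orthogonal complement of
the constant (top) eigenvector. -/
def SpectralGapLB (G : SimpleGraph V) (d : ℕ) (g : ℝ) : Prop :=
  ∀ x : V → ℝ, (∑ v : V, x v) = 0 →
    (∑ u : V, ∑ v : V, x u * lazyStep G d u v * x v) ≤ (1 - g) * ∑ v : V, x v ^ 2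

/-- Property P3 with constant `ρ₂`: for vertices `u,v` at distance at most
`d^ε`, the number of neighbours `w` of `v` with `dist w u ≤ dist u v` is at
most `ρ₂ · dist u v`. -/
def PropP3 (G : SimpleGraph V) (d : ℕ) (ε ρ₂ : ℝ) : Prop :=
  ∀ u v : V, (G.dist u v : ℝ) ≤ (d : ℝ) ^ ε →
    (((univ : Finset V).filter fun w => G.Adj v w ∧ G.dist w u ≤ G.dist u v).card : ℝ) ≤
      ρ₂ * (G.dist u v : ℝ)

/-- The number of edges of `G` with both endpoints in `S`. -/
def edgesInside (G : SimpleGraph V) (S : Finset V) : ℕ :=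
  ((S ×ˢ S).filter fun p => G.Adj p.1 p.2).card / 2

/-- The set of vertices of `G` not visited by the trajectory `p` at any step
`s` with `t₀ ≤ s` contains a connected (in the induced subgraph) subset of at
least `K` vertices; equivalently, the subgraph induced by this vacant set has a
connected component with at least `K` vertices. -/
def bigVacantComponent (G : SimpleGraph V) {t : ℕ} (p : Fin (t + 1) → V)
    (t₀ : ℕ) (K : ℝ) : Prop :=
  ∃ S : Finset V, (∀ v ∈ S, ∀ s : Fin (t + 1), t₀ ≤ (s : ℕ) → p s ≠ v) ∧
    (G.induce (S : Set V)).Connected ∧ K ≤ (S.card : ℝ)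


/-- Row sums of the simple walk. -/
lemma simple_row_sum (G : SimpleGraph V) (d : ℕ) (hd : 0 < d)
    (hdeg : ∀ x, ((univ : Finset V).filter fun w => G.Adj x w).card = d) (x : V) :
    ∑ w, (if G.Adj x w then ((d : ℝ))⁻¹ else 0) = 1 := by
  rw [← Finset.sum_filter, Finset.sum_const, hdeg x, nsmul_eq_mul]
  have : (d : ℝ) ≠ 0 := by positivity
  field_simp

lemma lazy_mulVec (G : SimpleGraph V) (d : ℕ) (f : V → ℝ) (x : V) :
    (lazyStep G d).mulVec f x
      = 2⁻¹ * f x + 2⁻¹ * ∑ w, (if G.Adj x w then ((d : ℝ))⁻¹ else 0) * f w := by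
  simp only [Matrix.mulVec, dotProduct, lazyStep, Matrix.of_apply, add_mul,
    Finset.sum_add_distrib, Finset.mul_sum, mul_assoc]
  congr 1
  simp

lemma lazy_nonneg (G : SimpleGraph V) (d : ℕ) (x y : V) : 0 ≤ lazyStep G d x y := by
  simp only [lazyStep, Matrix.of_apply]
  split_ifs <;> positivity

lemma lazy_pow_nonneg (G : SimpleGraph V) (d : ℕ) (k : ℕ) (x y : V) :
    0 ≤ ((lazyStep G d) ^ k) x y := by
  induction k generalizing x y with
  | zero => simp only [pow_zero, Matrix.one_apply]; split_ifs <;> norm_num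
  | succ k ih =>
    rw [pow_succ, Matrix.mul_apply]
    exact Finset.sum_nonneg fun w _ => mul_nonneg (ih x w) (lazy_nonneg G d w y)

lemma lazy_pow_diag (G : SimpleGraph V) (d : ℕ) (k : ℕ) (x : V) :
    (2⁻¹ : ℝ) ^ k ≤ ((lazyStep G d) ^ k) x x := by
  induction k with
  | zero => simp
  | succ k ih =>
    rw [pow_succ (lazyStep G d), Matrix.mul_apply, pow_succ]
    refine le_trans ?_ (Finset.single_le_sum (f := fun w => ((lazyStep G d) ^ k) x w *
      lazyStep G d w x) (fun w _ => mul_nonneg (lazy_pow_nonneg G d k x w)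
        (lazy_nonneg G d w x)) (Finset.mem_univ x))
    have : lazyStep G d x x = 2⁻¹ := by simp [lazyStep]
    simp only [this]
    gcongr

lemma lazy_mulVec_const (G : SimpleGraph V) (d : ℕ) (hd : 0 < d)
    (hdeg : ∀ x, ((univ : Finset V).filter fun w => G.Adj x w).card = d) (c : ℝ) :
    (lazyStep G d).mulVec (fun _ => c) = fun _ => c := by
  funext x
  rw [lazy_mulVec, ← Finset.sum_mul, simple_row_sum G d hd hdeg]
  ring

lemma lazy_pow_mulVec_const (G : SimpleGraph V) (d : ℕ) (hd : 0 < d)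
    (hdeg : ∀ x, ((univ : Finset V).filter fun w => G.Adj x w).card = d) (c : ℝ) (k : ℕ) :
    ((lazyStep G d) ^ k).mulVec (fun _ => c) = fun _ => c := by
  induction k with
  | zero => simp
  | succ k ih => rw [pow_succ, ← Matrix.mulVec_mulVec, lazy_mulVec_const G d hd hdeg, ih]

lemma lazy_sum_preserve (G : SimpleGraph V) (d : ℕ) (hd : 0 < d)
    (hdeg : ∀ x, ((univ : Finset V).filter fun w => G.Adj x w).card = d) (f : V → ℝ) :
    ∑ x, (lazyStep G d).mulVec f x = ∑ x, f x := by
  simp only [lazy_mulVec]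
  rw [Finset.sum_add_distrib, ← Finset.mul_sum, ← Finset.mul_sum, Finset.sum_comm]
  have : ∀ y, ∑ x, (if G.Adj x y then ((d : ℝ))⁻¹ else 0) * f y = f y := by
    intro y
    rw [← Finset.sum_mul]
    simp only [G.adj_comm _ y]
    rw [simple_row_sum G d hd hdeg, one_mul]
  simp only [this]
  ring

lemma lazy_contract (G : SimpleGraph V) (d : ℕ) (hd : 0 < d)
    (hdeg : ∀ x, ((univ : Finset V).filter fun w => G.Adj x w).card = d) (g : ℝ)
    (hg : SpectralGapLB G d g) (f : V → ℝ) (hf : ∑ x, f x = 0) :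
    ∑ x, ((lazyStep G d).mulVec f x) ^ 2 ≤ (1 - g) * ∑ x, f x ^ 2 := by
  have h1 := hg f hf
  have h2 : ∑ u : V, ∑ v : V, f u * lazyStep G d u v * f v
      = ∑ u, f u * (lazyStep G d).mulVec f u := by
    simp only [Matrix.mulVec, dotProduct, Finset.mul_sum, mul_assoc]
  rw [h2] at h1
  refine le_trans ?_ h1
  set Q : V → ℝ := fun x => ∑ w, (if G.Adj x w then ((d : ℝ))⁻¹ else 0) * f w with hQ
  have h3 : ∑ x, Q x ^ 2 ≤ ∑ x, f x ^ 2 := by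
    have hj : ∀ x, Q x ^ 2 ≤ ∑ w, (if G.Adj x w then ((d : ℝ))⁻¹ else 0) * f w ^ 2 := by
      intro x
      have hr := simple_row_sum G d hd hdeg x
      have h0 : 0 ≤ ∑ w, (if G.Adj x w then ((d : ℝ))⁻¹ else 0) * (f w - Q x) ^ 2 :=
        Finset.sum_nonneg fun w _ => mul_nonneg (by split_ifs <;> positivity) (sq_nonneg _)
      have he : ∑ w, (if G.Adj x w then ((d : ℝ))⁻¹ else 0) * (f w - Q x) ^ 2
          = ∑ w, (if G.Adj x w then ((d : ℝ))⁻¹ else 0) * f w ^ 2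
            - 2 * Q x * (∑ w, (if G.Adj x w then ((d : ℝ))⁻¹ else 0) * f w)
            + Q x ^ 2 * ∑ w, (if G.Adj x w then ((d : ℝ))⁻¹ else 0) := by
        generalize Q x = q
        rw [Finset.mul_sum, Finset.mul_sum, ← Finset.sum_sub_distrib, ← Finset.sum_add_distrib]
        refine Finset.sum_congr rfl fun w _ => ?_
        ring
      have hq : (∑ w, (if G.Adj x w then ((d : ℝ))⁻¹ else 0) * f w) = Q x := rfl
      rw [he, hr, hq] at h0
      nlinarith
    refine (Finset.sum_le_sum fun x _ => hj x).trans ?_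
    rw [Finset.sum_comm]
    refine Finset.sum_le_sum fun y _ => ?_
    rw [← Finset.sum_mul]
    simp only [G.adj_comm _ y]
    rw [simple_row_sum G d hd hdeg, one_mul]
  have h4 : ∀ x, (lazyStep G d).mulVec f x = 2⁻¹ * f x + 2⁻¹ * Q x := lazy_mulVec G d f
  have h5 : ∑ u, f u * (lazyStep G d).mulVec f u - ∑ x, ((lazyStep G d).mulVec f x) ^ 2
      = 4⁻¹ * (∑ x, f x ^ 2 - ∑ x, Q x ^ 2) := by
    rw [← Finset.sum_sub_distrib, ← Finset.sum_sub_distrib, Finset.mul_sum]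
    refine Finset.sum_congr rfl fun x _ => ?_
    rw [h4]; ring
  linarith

lemma lazy_pow_contract (G : SimpleGraph V) (d : ℕ) (hd : 0 < d)
    (hdeg : ∀ x, ((univ : Finset V).filter fun w => G.Adj x w).card = d) (g : ℝ) (hg1 : g ≤ 1)
    (hg : SpectralGapLB G d g) (f : V → ℝ) (hf : ∑ x, f x = 0) (k : ℕ) :
    ∑ x, (((lazyStep G d) ^ k).mulVec f x) ^ 2 ≤ (1 - g) ^ k * ∑ x, f x ^ 2 := by
  induction k generalizing f with
  | zero => simp
  | succ k ih =>
    rw [pow_succ, ← Matrix.mulVec_mulVec]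
    refine (ih _ (by rw [lazy_sum_preserve G d hd hdeg, hf])).trans ?_
    rw [pow_succ, mul_assoc]
    have : 0 ≤ 1 - g := by linarith
    gcongr
    exact lazy_contract G d hd hdeg g hg f hf

lemma lazy_mix [Nonempty V] (G : SimpleGraph V) (d : ℕ) (hd : 0 < d)
    (hdeg : ∀ x, ((univ : Finset V).filter fun w => G.Adj x w).card = d) (g : ℝ) (hg1 : g ≤ 1)
    (hg : SpectralGapLB G d g) (k : ℕ) (x y : V) :
    (((lazyStep G d) ^ k) x y - ((Fintype.card V : ℝ))⁻¹) ^ 2 ≤ (1 - g) ^ k := by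
  set N : ℝ := (Fintype.card V : ℝ) with hN
  have hNpos : 0 < N := by rw [hN]; exact_mod_cast Fintype.card_pos
  set z : V → ℝ := fun w => Pi.single (M := fun _ => ℝ) y 1 w - N⁻¹ with hz
  have hs : ∑ w, z w = 0 := by
    simp only [hz, Finset.sum_sub_distrib, Finset.sum_const, Finset.card_univ, nsmul_eq_mul,
      Finset.sum_pi_single', Finset.mem_univ, if_true, ← hN]
    field_simp; simp
  have hz2 : ∑ w, z w ^ 2 ≤ 1 := by
    have : ∀ w, z w ^ 2 = Pi.single (M := fun _ => ℝ) y 1 w - N⁻¹ * Pi.single (M := fun _ => ℝ) y 1 w - N⁻¹ * z w := by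
      intro w
      simp only [hz]
      by_cases h : w = y
      · subst h; simp; ring
      · simp [Pi.single_eq_of_ne h]; ring
    simp only [this]
    rw [Finset.sum_sub_distrib, Finset.sum_sub_distrib, ← Finset.mul_sum, ← Finset.mul_sum, hs]
    simp
    positivity
  have hv : ((lazyStep G d) ^ k).mulVec z x = ((lazyStep G d) ^ k) x y - N⁻¹ := by
    have : z = Pi.single (M := fun _ => ℝ) y 1 - fun _ => N⁻¹ := by funext w; rfl
    rw [this, Matrix.mulVec_sub, lazy_pow_mulVec_const G d hd hdeg]
    simp
  rw [← hv]
  have hb := lazy_pow_contract G d hd hdeg g hg1 hg z hs k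
  have hsl := Finset.single_le_sum (f := fun w => (((lazyStep G d) ^ k).mulVec z w) ^ 2)
    (fun w _ => sq_nonneg _) (Finset.mem_univ x)
  have hp : 0 ≤ (1 - g) ^ k := pow_nonneg (by linarith) k
  calc _ ≤ _ := hsl
    _ ≤ _ := hb
    _ ≤ (1 - g) ^ k * 1 := by gcongr
    _ = _ := mul_one _

lemma mixing_bound [Nonempty V] (G : SimpleGraph V) (d : ℕ) (hd : 0 < d)
    (hdeg : ∀ x, ((univ : Finset V).filter fun w => G.Adj x w).card = d) (g : ℝ) (hg0 : 0 < g)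
    (hg1 : g ≤ 1) (hg : SpectralGapLB G d g) :
    (∀ x y : V, |((lazyStep G d) ^ (mixingTime G d)) x y - ((Fintype.card V : ℝ))⁻¹|
        ≤ (((Fintype.card V : ℝ)) ^ 3)⁻¹) ∧
    (mixingTime G d : ℝ) ≤ 6 * Real.log (Fintype.card V) / g + 2 := by
  set N : ℝ := (Fintype.card V : ℝ) with hN
  have hNpos : 0 < N := by rw [hN]; exact_mod_cast Fintype.card_pos
  have hN1 : 1 ≤ N := by rw [hN]; exact_mod_cast Fintype.card_pos
  set t : ℕ := ⌈6 * Real.log N / g⌉₊ + 1 with ht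
  have hmem : t ∈ {T : ℕ | 1 ≤ T ∧ ∀ x y : V,
    |((lazyStep G d) ^ T) x y - ((Fintype.card V : ℝ))⁻¹| ≤ (((Fintype.card V : ℝ)) ^ 3)⁻¹} := by
    refine ⟨by omega, fun x y => ?_⟩
    have h1 := lazy_mix G d hd hdeg g hg1 hg t x y
    have h2 : (1 - g) ^ t ≤ ((N ^ 3)⁻¹) ^ 2 := by
      have h3 : (1 - g) ≤ Real.exp (-g) := by
        have := Real.add_one_le_exp (-g); linarith
      have h4 : (1 - g) ^ t ≤ Real.exp (-g) ^ t := pow_le_pow_left₀ (by linarith) h3 t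
      have h5 : 6 * Real.log N / g ≤ t := by
        rw [ht]; push_cast
        have := Nat.le_ceil (6 * Real.log N / g); linarith
      rw [div_le_iff₀ hg0] at h5
      have h6 : ((N ^ 3)⁻¹) ^ 2 = Real.exp (-(6 * Real.log N)) := by
        rw [Real.exp_neg, show 6 * Real.log N = Real.log N * (6 : ℕ) by push_cast; ring,
          Real.exp_mul, Real.exp_log hNpos, Real.rpow_natCast]
        rw [← inv_pow, ← inv_pow, ← pow_mul]
      rw [h6]
      refine h4.trans ?_
      rw [← Real.exp_nat_mul]
      apply Real.exp_le_exp.mpr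
      nlinarith
    exact abs_le_of_sq_le_sq (h1.trans h2) (by positivity)
  constructor
  · exact (Nat.sInf_mem ⟨t, hmem⟩).2
  · have h1 : mixingTime G d ≤ t := Nat.sInf_le hmem
    have h2 : (mixingTime G d : ℝ) ≤ t := by exact_mod_cast h1
    have hl : 0 ≤ Real.log N := Real.log_nonneg hN1
    have h3 := Nat.ceil_lt_add_one (show 0 ≤ 6 * Real.log N / g by positivity)
    have h4 : (t : ℝ) = ⌈6 * Real.log N / g⌉₊ + 1 := by rw [ht]; push_cast; ring
    linarith

/-- Supersolutions bound the Green function. -/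
lemma green_le (G : SimpleGraph V) (d : ℕ) (hd : 0 < d)
    (hdeg : ∀ x, ((univ : Finset V).filter fun w => G.Adj x w).card = d)
    (C' : Finset V) (f : V → ℝ) (δ : ℝ) (hf : ∀ x, 0 ≤ f x)
    (h : ∀ x, (if x ∈ C' then (1 : ℝ) else 0) + (lazyStep G d).mulVec f x ≤ f x + δ)
    (t : ℕ) (x : V) :
    ∑ k ∈ Finset.range t, ∑ w ∈ C', ((lazyStep G d) ^ k) x w ≤ f x + t * δ := by
  induction t generalizing x with
  | zero => simpa using hf x
  | succ t ih =>
    rw [Finset.sum_range_succ']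
    have h0 : ∑ w ∈ C', ((lazyStep G d) ^ 0) x w = if x ∈ C' then (1 : ℝ) else 0 := by
      simp [Matrix.one_apply]
    have h1 : ∑ k ∈ Finset.range t, ∑ w ∈ C', ((lazyStep G d) ^ (k + 1)) x w
        = (lazyStep G d).mulVec
          (fun y => ∑ k ∈ Finset.range t, ∑ w ∈ C', ((lazyStep G d) ^ k) y w) x := by
      simp only [Matrix.mulVec, dotProduct, Finset.mul_sum, pow_succ', Matrix.mul_apply]
      rw [Finset.sum_comm (s := (univ : Finset V)) (t := Finset.range t)]
      refine Finset.sum_congr rfl fun k _ => ?_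
      rw [Finset.sum_comm]
    have h2 : (lazyStep G d).mulVec
          (fun y => ∑ k ∈ Finset.range t, ∑ w ∈ C', ((lazyStep G d) ^ k) y w) x
        ≤ (lazyStep G d).mulVec (f + fun _ => (t : ℝ) * δ) x := by
      simp only [Matrix.mulVec, dotProduct]
      exact Finset.sum_le_sum fun y _ => mul_le_mul_of_nonneg_left (ih y) (lazy_nonneg G d x y)
    rw [Matrix.mulVec_add, lazy_mulVec_const G d hd hdeg] at h2
    simp only [Pi.add_apply] at h2
    rw [h0, h1]
    have := h x
    push_cast
    linarith

/-- The radial supersolution. -/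
def radial (K a : ℝ) (j : ℕ) : ℝ := K * (a ^ (j - 1) * (Nat.factorial j : ℝ))

lemma radial_succ (K a : ℝ) (j : ℕ) (hj : 1 ≤ j) :
    radial K a (j + 1) = a * (j + 1) * radial K a j := by
  obtain ⟨i, rfl⟩ : ∃ i, j = i + 1 := ⟨j - 1, by omega⟩
  simp only [radial, Nat.add_sub_cancel, Nat.factorial_succ]
  push_cast
  ring

lemma radial_nonneg (K a : ℝ) (hK : 0 ≤ K) (ha : 0 ≤ a) (j : ℕ) : 0 ≤ radial K a j := by
  unfold radial; positivity

lemma radial_anti (K a : ℝ) (hK : 0 ≤ K) (ha : 0 ≤ a) (L : ℕ) (haL : a * L ≤ 1 / 2) :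
    Antitone fun j => radial K a (min j L) := by
  refine antitone_nat_of_succ_le fun j => ?_
  by_cases hj : j < L
  · simp only [min_eq_left hj.le, min_eq_left (show j + 1 ≤ L from hj)]
    rcases Nat.eq_zero_or_pos j with rfl | hp
    · simp [radial]
    · rw [radial_succ K a j hp]
      have h1 : ((j : ℝ) + 1) ≤ L := by exact_mod_cast hj
      have h2 := mul_le_mul_of_nonneg_left h1 ha
      have := radial_nonneg K a hK ha j
      nlinarith
  · simp only [min_eq_right (not_lt.mp hj), min_eq_right (show L ≤ j + 1 by omega)]
    exact le_rfl

lemma radial_le_pow (K a : ℝ) (hK : 0 ≤ K) (ha : 0 ≤ a) (L j : ℕ) (hj : j + 1 ≤ L) :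
    radial K a (j + 1) ≤ K * (a * L) ^ j := by
  induction j with
  | zero => simp [radial]
  | succ j ih =>
    rw [radial_succ K a _ (by omega), pow_succ]
    have := ih (by omega)
    have h1 : (((j + 1 : ℕ) : ℝ) + 1) ≤ L := by exact_mod_cast hj
    have h2 := mul_le_mul_of_nonneg_left h1 ha
    calc a * (((j + 1 : ℕ) : ℝ) + 1) * radial K a (j + 1) ≤ (a * L) * (K * (a * L) ^ j) := by
          have := radial_nonneg K a hK ha (j + 1)
          gcongr
      _ = _ := by ring

lemma radial_super (G : SimpleGraph V) (d : ℕ) (hd : 0 < d) (hconn : G.Connected)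
    (hdeg : ∀ x, ((univ : Finset V).filter fun w => G.Adj x w).card = d)
    (v : V) (C' : Finset V) (hC : ∀ w ∈ C', G.Adj v w) (ρ a K : ℝ) (L : ℕ) (hL : 3 ≤ L)
    (hρ : 0 < ρ) (ha : a = 2 * ρ / d) (haL : a * L ≤ 1 / 2) (hK : 0 ≤ K)
    (hKa : 2 + 5 / 2 * a * K ≤ K)
    (hP : ∀ x : V, G.dist v x ≤ L →
      (((univ : Finset V).filter fun w => G.Adj x w ∧ G.dist w v ≤ G.dist v x).card : ℝ) ≤
      ρ * (G.dist v x : ℝ)) (x : V) :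
    (if x ∈ C' then (1 : ℝ) else 0)
      + (lazyStep G d).mulVec (fun y => radial K a (min (G.dist v y) L)) x
      ≤ radial K a (min (G.dist v x) L) + radial K a (L - 1) := by
  have hdr : (0 : ℝ) < d := by exact_mod_cast hd
  have ha0 : 0 ≤ a := by rw [ha]; positivity
  set F : ℕ → ℝ := fun j => radial K a (min j L) with hF
  have hFa : Antitone F := radial_anti K a hK ha0 L haL
  have hF0 : ∀ j, 0 ≤ F j := fun j => radial_nonneg K a hK ha0 _
  have hδ : 0 ≤ radial K a (L - 1) := radial_nonneg K a hK ha0 _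
  have hrow := simple_row_sum G d hd hdeg x
  rw [lazy_mulVec]
  change _ + (2⁻¹ * F (G.dist v x) + 2⁻¹ * ∑ w, (if G.Adj x w then ((d : ℝ))⁻¹ else 0) *
    F (G.dist v w)) ≤ F (G.dist v x) + _
  -- distances of neighbours
  have hnb : ∀ w, G.Adj x w → G.dist v x ≤ G.dist v w + 1 := by
    intro w hw
    have h1 := hconn.dist_triangle (u := v) (v := w) (w := x)
    have h2 : G.dist w x = 1 := SimpleGraph.dist_eq_one_iff_adj.mpr hw.symm
    omega
  have hup : ∀ B : ℝ, (∀ w, G.Adj x w → F (G.dist v w) ≤ B) →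
      ∑ w, (if G.Adj x w then ((d : ℝ))⁻¹ else 0) * F (G.dist v w) ≤ B := by
    intro B hB
    calc _ ≤ ∑ w, (if G.Adj x w then ((d : ℝ))⁻¹ else 0) * B := by
          refine Finset.sum_le_sum fun w _ => ?_
          by_cases hw : G.Adj x w
          · simp only [hw, if_true]
            exact mul_le_mul_of_nonneg_left (hB w hw) (by positivity)
          · simp [hw]
      _ = B := by rw [← Finset.sum_mul, hrow, one_mul]
  have hmemC : x ∈ C' → G.dist v x = 1 := fun h =>
    SimpleGraph.dist_eq_one_iff_adj.mpr (hC x h)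
  rcases Nat.lt_or_ge L (G.dist v x) with hgt | hle
  · have hx : x ∉ C' := fun h => by have := hmemC h; omega
    have hE : F (G.dist v x - 1) = F (G.dist v x) := by
      simp only [hF]; rw [min_eq_right hgt.le, min_eq_right (by omega)]
    have := hup (F (G.dist v x)) (fun w hw => by
      rw [← hE]; exact hFa (by have := hnb w hw; omega))
    simp only [hx, if_false]
    linarith
  rcases Nat.eq_zero_or_pos (G.dist v x) with h0 | hpos
  · have hx : x ∉ C' := fun h => by have := hmemC h; omega
    have := hup (F (G.dist v x)) (fun w hw => by rw [h0]; exact hFa (Nat.zero_le _))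
    simp only [hx, if_false]
    linarith
  -- the main case
  set j := G.dist v x with hj
  have hmain : ∑ w, (if G.Adj x w then ((d : ℝ))⁻¹ else 0) * F (G.dist v w)
      ≤ a * j / 2 * F (j - 1) + F (j + 1) := by
    have hpt : ∀ w, (if G.Adj x w then ((d : ℝ))⁻¹ else 0) * F (G.dist v w)
        ≤ (if G.Adj x w ∧ G.dist w v ≤ j then (1 : ℝ) else 0) * ((d : ℝ)⁻¹ * F (j - 1))
          + (if G.Adj x w then ((d : ℝ))⁻¹ else 0) * F (j + 1) := by
      intro w
      by_cases hw : G.Adj x w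
      · have hdi : (0 : ℝ) < (d : ℝ)⁻¹ := by positivity
        have hh := hnb w hw
        by_cases hc : G.dist w v ≤ j
        · simp only [hw, hc, and_self, if_true, one_mul]
          have h1 : F (G.dist v w) ≤ F (j - 1) := hFa (by omega)
          have h2 := mul_le_mul_of_nonneg_left h1 hdi.le
          have h3 := mul_nonneg hdi.le (hF0 (j + 1))
          linarith
        · simp only [hw, hc, and_false, if_false, if_true, zero_mul, zero_add]
          rw [G.dist_comm] at hc
          exact mul_le_mul_of_nonneg_left (hFa (by omega)) hdi.le
      · simp [hw]
    refine (Finset.sum_le_sum fun w _ => hpt w).trans ?_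
    rw [Finset.sum_add_distrib, ← Finset.sum_mul, ← Finset.sum_mul, hrow, one_mul,
      Finset.sum_boole]
    have h1 := hP x hle
    have h2 : (0 : ℝ) ≤ (d : ℝ)⁻¹ * F (j - 1) := mul_nonneg (by positivity) (hF0 _)
    have h3 := mul_le_mul_of_nonneg_right h1 h2
    have h4 : ρ * (j : ℝ) * ((d : ℝ)⁻¹ * F (j - 1)) = a * j / 2 * F (j - 1) := by
      rw [ha]; field_simp
    linarith
  rcases Nat.lt_or_ge j L with hlt | hge
  · have e1 : F j = radial K a j := by simp only [hF]; rw [min_eq_left hle]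
    have e2 : F (j + 1) = radial K a (j + 1) := by simp only [hF]; rw [min_eq_left hlt]
    have e3 : F (j - 1) = radial K a (j - 1) := by simp only [hF]; rw [min_eq_left (by omega)]
    rw [e2, e3] at hmain
    rw [e1]
    rw [radial_succ K a j hpos] at hmain
    rcases Nat.lt_or_ge 1 j with h1j | h1j
    · have hx : x ∉ C' := fun h => by have := hmemC h; omega
      simp only [hx, if_false]
      obtain ⟨i, hi⟩ : ∃ i, j = i + 1 := ⟨j - 1, by omega⟩
      have e4 : radial K a j = a * j * radial K a (j - 1) := by
        rw [hi, radial_succ K a i (by omega)]; simp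
      have h1 : ((j : ℝ) + 1) ≤ L := by exact_mod_cast hlt
      have h2 := mul_le_mul_of_nonneg_left h1 ha0
      have h3 : a * ((j : ℝ) + 1) * radial K a j ≤ 1 / 2 * radial K a j :=
        mul_le_mul_of_nonneg_right (by linarith) (radial_nonneg K a hK ha0 j)
      linarith
    · have h1 : j = 1 := by omega
      rw [h1] at hmain ⊢
      have r1 : radial K a 1 = K := by simp [radial]
      have r0 : radial K a (1 - 1) = K := by simp [radial]
      rw [r1, r0] at hmain
      rw [r1]
      have hi : (if x ∈ C' then (1 : ℝ) else 0) ≤ 1 := by split_ifs <;> norm_num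
      push_cast at hmain
      linarith
  · have hjL : j = L := le_antisymm hle hge
    have hx : x ∉ C' := fun h => by have := hmemC h; omega
    simp only [hx, if_false]
    have e3 : F (j - 1) = radial K a (L - 1) := by
      simp only [hF]; rw [min_eq_left (by omega), hjL]
    have e4 : F (j + 1) ≤ F j := hFa (by omega)
    have e5 : a * j / 2 * F (j - 1) ≤ 1 * F (j - 1) :=
      mul_le_mul_of_nonneg_right (by rw [hjL]; linarith) (hF0 _)
    rw [e3] at hmain e5
    linarith

set_option maxHeartbeats 1000000 in
/-- The deterministic core estimate. -/
lemma core_bound [Nonempty V] (G : SimpleGraph V) (d : ℕ) (hd : 0 < d) (hconn : G.Connected)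
    (hdeg : ∀ x, ((univ : Finset V).filter fun w => G.Adj x w).card = d)
    (v : V) (C' : Finset V) (hC : ∀ w ∈ C', G.Adj v w) (ρ g : ℝ) (L : ℕ) (hL : 18 ≤ L)
    (hρ : 0 < ρ) (hg0 : 0 < g) (hg1 : g ≤ 1) (hg : SpectralGapLB G d g)
    (hLd : (L : ℝ) ≤ Real.sqrt d) (hd1 : 4 * ρ ≤ Real.sqrt d)
    (hd2 : (2 * ρ * Real.exp 1) ^ 2 ≤ Real.sqrt d)
    (c : ℝ) (hc : 0 < c) (hgc : c / (d : ℝ) ^ 3 ≤ g)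
    (hlog : Real.log (Fintype.card V) ≤ Real.exp (L + 1))
    (hP : ∀ x : V, G.dist v x ≤ L →
      (((univ : Finset V).filter fun w => G.Adj x w ∧ G.dist w v ≤ G.dist v x).card : ℝ) ≤
      ρ * (G.dist v x : ℝ)) (u : V) (hu : u ∈ C') :
    |(∑ k ∈ Finset.range (mixingTime G d + 1), ∑ w ∈ C', ((lazyStep G d) ^ k) u w) - 2|
      ≤ (2 + 20 * ρ + 4 * (6 / c + 3) * Real.exp 1 ^ 3) / d := by
  have hdr : (0 : ℝ) < d := by exact_mod_cast hd
  have hd1r : (1 : ℝ) ≤ d := by exact_mod_cast hd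
  obtain ⟨hmix, hT⟩ := mixing_bound G d hd hdeg g hg0 hg1 hg
  set T := mixingTime G d with hTdef
  set N : ℝ := (Fintype.card V : ℝ) with hN
  have hNpos : 0 < N := by rw [hN]; exact_mod_cast Fintype.card_pos
  have hN1 : 1 ≤ N := by rw [hN]; exact_mod_cast Fintype.card_pos
  have hdN : (d : ℝ) ≤ N := by
    rw [hN, ← hdeg u]; exact_mod_cast Finset.card_le_univ _
  set s := Real.sqrt d with hs
  have hs2 : s * s = d := Real.mul_self_sqrt hdr.le
  have hspos : 0 < s := Real.sqrt_pos.mpr hdr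
  have he : 0 < Real.exp 1 := Real.exp_pos 1
  rw [abs_le]
  constructor
  · -- lower bound
    have h1 : ∑ k ∈ Finset.range (T + 1), (2⁻¹ : ℝ) ^ k
        ≤ ∑ k ∈ Finset.range (T + 1), ∑ w ∈ C', ((lazyStep G d) ^ k) u w := by
      refine Finset.sum_le_sum fun k _ => (lazy_pow_diag G d k u).trans ?_
      exact Finset.single_le_sum (f := fun w => ((lazyStep G d) ^ k) u w)
        (fun w _ => lazy_pow_nonneg G d k u w) hu
    have h2 : ∑ k ∈ Finset.range (T + 1), (2⁻¹ : ℝ) ^ k = 2 - 2⁻¹ ^ T := by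
      rw [geom_sum_eq (by norm_num), pow_succ]; ring
    have h3 : (2⁻¹ : ℝ) ^ T ≤ 2 / d := by
      have ha := lazy_pow_diag G d T u
      have hb := (abs_le.mp (hmix u u)).2
      have hc3 : (N ^ 3)⁻¹ ≤ N⁻¹ := by
        apply inv_anti₀ hNpos
        exact le_self_pow₀ hN1 (by norm_num)
      have hd3 : N⁻¹ ≤ (d : ℝ)⁻¹ := inv_anti₀ hdr hdN
      rw [div_eq_mul_inv]
      linarith
    have h4 : 2 / (d : ℝ) ≤ (2 + 20 * ρ + 4 * (6 / c + 3) * Real.exp 1 ^ 3) / d := by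
      gcongr
      have : 0 < 4 * (6 / c + 3) * Real.exp 1 ^ 3 := by positivity
      linarith
    linarith
  · -- upper bound
    set a : ℝ := 2 * ρ / d with ha
    have ha0 : 0 < a := by positivity
    have haLs : a * L ≤ 2 * ρ / s := by
      rw [ha, ← hs2, div_mul_eq_mul_div, div_le_div_iff₀ (by positivity) hspos]
      have := mul_le_mul_of_nonneg_left hLd (show 0 ≤ 2 * ρ * s by positivity)
      linarith
    have haL : a * L ≤ 1 / 2 := by
      refine haLs.trans ?_
      rw [div_le_iff₀ hspos]; linarith
    have hLr : (18 : ℝ) ≤ L := by exact_mod_cast hL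
    have ha5 : a ≤ 1 / 36 := by nlinarith
    set K : ℝ := 2 / (1 - 5 / 2 * a) with hK
    have hden : 1 / 2 ≤ 1 - 5 / 2 * a := by linarith
    have hKeq : K * (1 - 5 / 2 * a) = 2 := by
      rw [hK]; exact div_mul_cancel₀ _ (by linarith)
    have hK0 : 0 < K := by rw [hK]; apply div_pos <;> linarith
    have hK4 : K ≤ 4 := by nlinarith
    have hKa : 2 + 5 / 2 * a * K ≤ K := by linarith
    have hsup := radial_super G d hd hconn hdeg v C' hC ρ a K L (by omega) hρ ha haL hK0.le hKa hP
    have hgr := green_le G d hd hdeg C' _ _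
      (fun x => radial_nonneg K a hK0.le ha0.le _) hsup (T + 1) u
    have hdu : G.dist v u = 1 := SimpleGraph.dist_eq_one_iff_adj.mpr (hC u hu)
    rw [hdu, min_eq_left (by omega)] at hgr
    have r1 : radial K a 1 = K := by simp [radial]
    rw [r1] at hgr
    have hK2 : K ≤ 2 + 20 * ρ / d := by
      have : 5 / 2 * a * K ≤ 5 / 2 * a * 4 := by gcongr
      have h2 : 5 / 2 * a * 4 = 20 * ρ / d := by rw [ha]; ring
      linarith
    -- tail
    set q : ℝ := 2 * ρ * Real.exp 1 / s with hq
    have hq0 : 0 < q := by positivity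
    have hq2 : q ^ 2 ≤ 1 / s := by
      rw [hq, div_pow, div_le_div_iff₀ (by positivity) hspos, one_mul, pow_two s]
      exact mul_le_mul_of_nonneg_right hd2 hspos.le
    have hq4 : q ^ 4 ≤ 1 / d := by
      calc q ^ 4 = q ^ 2 * q ^ 2 := by ring
        _ ≤ (1 / s) * (1 / s) := by gcongr
        _ = 1 / d := by rw [← hs2]; field_simp
    have hs1 : 1 ≤ s := by linarith
    have hq1 : q ≤ 1 := by
      have : q ^ 2 ≤ 1 := hq2.trans (by rw [div_le_one hspos]; exact hs1)
      exact (sq_le_one_iff₀ hq0.le).mp this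
    have hq16 : q ^ (L - 2) ≤ 1 / (d : ℝ) ^ 4 := by
      calc q ^ (L - 2) ≤ q ^ 16 := pow_le_pow_of_le_one hq0.le hq1 (by omega)
        _ = (q ^ 4) ^ 4 := by ring
        _ ≤ (1 / d) ^ 4 := by gcongr
        _ = _ := by rw [div_pow, one_pow]
    have hrad : radial K a (L - 1) ≤ 4 * (q / Real.exp 1) ^ (L - 2) := by
      have h1 := radial_le_pow K a hK0.le ha0.le L (L - 2) (by omega)
      rw [show L - 2 + 1 = L - 1 by omega] at h1
      refine h1.trans ?_
      have h2 : q / Real.exp 1 = 2 * ρ / s := by rw [hq]; field_simp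
      rw [h2]
      gcongr
    have hTb : (T : ℝ) + 1 ≤ (6 / c + 3) * d ^ 3 * Real.exp 1 ^ (L + 1) := by
      have hE : Real.exp (L + 1) = Real.exp 1 ^ (L + 1) := by
        rw [← Real.exp_nat_mul]; push_cast; ring_nf
      rw [hE] at hlog
      have hl0 : 0 ≤ Real.log N := Real.log_nonneg hN1
      have h1 : 6 * Real.log N / g ≤ 6 / c * d ^ 3 * Real.exp 1 ^ (L + 1) := by
        calc 6 * Real.log N / g ≤ 6 * Real.exp 1 ^ (L + 1) / (c / (d : ℝ) ^ 3) := by gcongr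
          _ = _ := by field_simp
      have h2 : (1 : ℝ) ≤ d ^ 3 * Real.exp 1 ^ (L + 1) := by
        have e1 : (1 : ℝ) ≤ (d : ℝ) ^ 3 := one_le_pow₀ hd1r
        have e2 : (1 : ℝ) ≤ Real.exp 1 ^ (L + 1) := one_le_pow₀ (Real.one_le_exp (by norm_num))
        nlinarith
      linarith
    have htail : ((T + 1 : ℕ) : ℝ) * radial K a (L - 1)
        ≤ 4 * (6 / c + 3) * Real.exp 1 ^ 3 / d := by
      push_cast
      calc ((T : ℝ) + 1) * radial K a (L - 1)
          ≤ ((6 / c + 3) * d ^ 3 * Real.exp 1 ^ (L + 1)) * (4 * (q / Real.exp 1) ^ (L - 2)) := by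
            have := radial_nonneg K a hK0.le ha0.le (L - 1)
            gcongr
        _ = 4 * (6 / c + 3) * Real.exp 1 ^ 3 * d ^ 3 * q ^ (L - 2) := by
            rw [show L + 1 = (L - 2) + 3 by omega, pow_add, div_pow]
            field_simp
        _ ≤ 4 * (6 / c + 3) * Real.exp 1 ^ 3 * d ^ 3 * (1 / (d : ℝ) ^ 4) := by gcongr
        _ = _ := by field_simp
    have hfin : (2 + 20 * ρ + 4 * (6 / c + 3) * Real.exp 1 ^ 3) / (d : ℝ)
        = 2 / d + 20 * ρ / d + 4 * (6 / c + 3) * Real.exp 1 ^ 3 / d := by ring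
    have : 0 < 2 / (d : ℝ) := by positivity
    linarith

/-- **Lemma 4(iii)**: for a sequence of connected `d`-regular graphs satisfying
P1, P2, P3, for any vertex `v`, nonempty `C' ⊆ N(v)` and start `u ∈ C'`, the
expected number of visits to `C'` within the mixing time by the lazy walk
satisfies `R_{C'} = 2 + O(1/d)`, uniformly. -/
theorem expected_returns_to_neighbourhood_subset
    (G : ∀ n : ℕ, SimpleGraph (Fin (n + 1))) (d : ℕ → ℕ) (ε : ℕ → ℝ)
    (hreg : ∀ n, (G n).IsRegularOfDegree (d n))
    (hconn : ∀ n, (G n).Connected)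
    (hd : Tendsto (fun n => (d n : ℝ)) atTop atTop)
    (hε : ∀ n, 0 < ε n ∧ ε n < 1)
    (hP1 : ∃ c₁ ρ₁ : ℝ, 0 < c₁ ∧ 0 < ρ₁ ∧ ρ₁ ≤ 3 ∧
      ∀ n, SpectralGapLB (G n) (d n) (c₁ / (d n : ℝ) ^ ρ₁))
    (hP2a : Tendsto (fun n : ℕ => Real.log (Real.log ((n : ℝ) + 1)) ^ (2 / ε n) / (d n : ℝ))
      atTop (nhds 0))
    (hP2b : ∃ c₂ : ℝ, 0 < c₂ ∧ ∀ n, 1 ≤ n →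
      (d n : ℝ) ≤ c₂ * (((n : ℝ) + 1) / Real.log ((n : ℝ) + 1)) ^ ((1 : ℝ) / 5))
    (hP3 : ∃ ρ₂ : ℝ, 0 < ρ₂ ∧ ∀ n, PropP3 (G n) (d n) (ε n) ρ₂)
    :
    ∃ C : ℝ, 0 < C ∧ ∃ n₀ : ℕ, ∀ n, n₀ ≤ n → ∀ v : Fin (n + 1),
      ∀ C' : Finset (Fin (n + 1)), C'.Nonempty → (∀ w ∈ C', (G n).Adj v w) →
        ∀ u ∈ C',
          |(∑ k ∈ Finset.range (mixingTime (G n) (d n) + 1),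
              ∑ w ∈ C', ((lazyStep (G n) (d n)) ^ k) u w) - 2| ≤ C / (d n : ℝ) := by
  obtain ⟨c₁, ρ₁, hc₁, hρ₁, hρ₁3, hgap⟩ := hP1
  obtain ⟨ρ, hρ, hP3⟩ := hP3
  set c : ℝ := min c₁ 1 with hc
  have hc0 : 0 < c := lt_min hc₁ one_pos
  refine ⟨2 + 20 * ρ + 4 * (6 / c + 3) * Real.exp 1 ^ 3, by positivity, ?_⟩
  have hsq : Tendsto (fun n => Real.sqrt (d n : ℝ)) atTop atTop := Real.tendsto_sqrt_atTop.comp hd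
  have hn1 : Tendsto (fun n : ℕ => (n : ℝ) + 1) atTop atTop :=
    tendsto_atTop_add_const_right _ _ tendsto_natCast_atTop_atTop
  have hll : Tendsto (fun n : ℕ => Real.log (Real.log ((n : ℝ) + 1))) atTop atTop :=
    Real.tendsto_log_atTop.comp (Real.tendsto_log_atTop.comp hn1)
  have hl : Tendsto (fun n : ℕ => Real.log ((n : ℝ) + 1)) atTop atTop :=
    Real.tendsto_log_atTop.comp hn1
  have hev : ∀ᶠ n : ℕ in atTop, 1 ≤ (d n : ℝ) ∧ 4 * ρ ≤ Real.sqrt (d n) ∧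
      (2 * ρ * Real.exp 1) ^ 2 ≤ Real.sqrt (d n) ∧ 18 ≤ Real.log (Real.log ((n : ℝ) + 1)) ∧
      0 < Real.log ((n : ℝ) + 1) ∧
      Real.log (Real.log ((n : ℝ) + 1)) ^ (2 / ε n) / (d n : ℝ) < 1 := by
    filter_upwards [hd.eventually_ge_atTop 1, hsq.eventually_ge_atTop (4 * ρ),
      hsq.eventually_ge_atTop ((2 * ρ * Real.exp 1) ^ 2), hll.eventually_ge_atTop 18,
      hl.eventually_gt_atTop 0, hP2a.eventually_lt_const one_pos] with n h1 h2 h3 h4 h5 h6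
    exact ⟨h1, h2, h3, h4, h5, h6⟩
  obtain ⟨n₀, hn₀⟩ := Filter.eventually_atTop.mp hev
  refine ⟨n₀, fun n hn v C' _ hC u hu => ?_⟩
  obtain ⟨h1, h2, h3, h4, h5, h6⟩ := hn₀ n hn
  set ℓ := Real.log (Real.log ((n : ℝ) + 1)) with hℓ
  have hdpos : 0 < d n := by
    have : (0 : ℝ) < d n := by linarith
    exact_mod_cast this
  have hdr : (0 : ℝ) < d n := by exact_mod_cast hdpos
  have hpw : ℓ ^ (2 / ε n) ≤ d n := by
    rw [div_lt_one hdr] at h6; exact h6.le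
  obtain ⟨hε0, hε1⟩ := hε n
  have hℓ0 : 0 ≤ ℓ := by linarith
  have hde : ℓ ^ 2 ≤ (d n : ℝ) ^ ε n := by
    have := Real.rpow_le_rpow (Real.rpow_nonneg hℓ0 _) hpw hε0.le
    rw [← Real.rpow_mul hℓ0, div_mul_cancel₀ _ hε0.ne'] at this
    exact_mod_cast this
  have hd2 : ℓ ^ 2 ≤ d n := by
    refine hde.trans ?_
    calc (d n : ℝ) ^ ε n ≤ (d n : ℝ) ^ (1 : ℝ) := Real.rpow_le_rpow_of_exponent_le h1 hε1.le
      _ = d n := Real.rpow_one _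
  have hfl : ((⌊ℓ⌋₊ : ℕ) : ℝ) ≤ ℓ := Nat.floor_le hℓ0
  have hgn : SpectralGapLB (G n) (d n) (c / (d n : ℝ) ^ 3) := by
    intro x hx
    refine (hgap n x hx).trans ?_
    have hx2 : 0 ≤ ∑ w, x w ^ 2 := Finset.sum_nonneg fun _ _ => sq_nonneg _
    refine mul_le_mul_of_nonneg_right ?_ hx2
    have : c / (d n : ℝ) ^ 3 ≤ c₁ / (d n : ℝ) ^ ρ₁ := by
      have hp : (d n : ℝ) ^ ρ₁ ≤ (d n : ℝ) ^ 3 := by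
        have := Real.rpow_le_rpow_of_exponent_le h1 hρ₁3
        exact_mod_cast this
      have hp0 : 0 < (d n : ℝ) ^ ρ₁ := Real.rpow_pos_of_pos hdr _
      have hcc : c ≤ c₁ := min_le_left _ _
      gcongr
    linarith
  refine core_bound (G n) (d n) hdpos (hconn n) ?_ v C' hC ρ (c / (d n : ℝ) ^ 3) ⌊ℓ⌋₊ ?_ hρ
    (by positivity) ?_ hgn ?_ h2 h3 c hc0 le_rfl ?_ ?_ u hu
  · intro x
    rw [← hreg n x, ← SimpleGraph.card_neighborFinset_eq_degree]
    congr 1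
    ext w; simp
  · exact Nat.le_floor (by exact_mod_cast h4)
  · rw [div_le_one (by positivity)]
    exact (min_le_right _ _).trans (one_le_pow₀ h1)
  · exact hfl.trans (Real.le_sqrt_of_sq_le hd2)
  · rw [Fintype.card_fin]
    push_cast
    rw [← Real.exp_log h5]
    exact Real.exp_le_exp.mpr (Nat.lt_floor_add_one ℓ).le
  · intro x hx
    refine hP3 n v x (le_trans ?_ hde)
    have hx' : ((G n).dist v x : ℝ) ≤ (⌊ℓ⌋₊ : ℕ) := by exact_mod_cast hx
    nlinarith

end
end

section
/- Let (G_n) be a sequence of connected d-regular simple graphs on n vertices with d = d(n) → ∞ and ε = ε(n) ∈ (0,1) with ε(n)·log d → ∞, satisfying properties P1, P2, P3 and P4. Let t_{−ε} = (1−ε)·n·ln d. Then there exists a constant c > 0 such that, for any sequence of starting vertices, the probability that the subgraph of G_n induced by the vertices not visited by the lazy random walk during the time interval [1, 2t_{−ε}] contains a connected component with at least exp(c·d^{ε/2}) vertices tends to 1 as n → ∞. -/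
open Finset Filter

noncomputable section
open scoped Classical

variable {V : Type*} [Fintype V] [DecidableEq V]

set_option linter.unusedSectionVars false

open Matrix in
lemma vg_psd_cs (Q : Matrix V V ℝ) (hs : Qᵀ = Q) (hp : ∀ x : V → ℝ, 0 ≤ x ⬝ᵥ Q *ᵥ x)
    (x y : V → ℝ) : (x ⬝ᵥ Q *ᵥ y) ^ 2 ≤ (x ⬝ᵥ Q *ᵥ x) * (y ⬝ᵥ Q *ᵥ y) := by
  have hsym : y ⬝ᵥ Q *ᵥ x = x ⬝ᵥ Q *ᵥ y := by
    rw [dotProduct_comm, dotProduct_comm x]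
    rw [dotProduct_comm, dotProduct_mulVec, ← mulVec_transpose, hs]
  have h : ∀ t : ℝ, 0 ≤ (y ⬝ᵥ Q *ᵥ y) * (t * t) + (2 * (x ⬝ᵥ Q *ᵥ y)) * t + x ⬝ᵥ Q *ᵥ x := by
    intro t
    have := hp (x + t • y)
    simp only [mulVec_add, mulVec_smul, dotProduct_add, add_dotProduct, smul_dotProduct,
      dotProduct_smul, smul_eq_mul, hsym] at this
    linarith
  have := discrim_le_zero h
  unfold discrim at this
  nlinarith

open Matrix in
lemma vg_cs (x y : V → ℝ) : (x ⬝ᵥ y) ^ 2 ≤ (x ⬝ᵥ x) * (y ⬝ᵥ y) := by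
  have := Finset.sum_mul_sq_le_sq_mul_sq Finset.univ x y
  simp only [dotProduct]
  simpa [sq] using this

open Matrix in
lemma vg_mul_self_nonneg (x : V → ℝ) : 0 ≤ x ⬝ᵥ x :=
  Finset.sum_nonneg fun i _ => mul_self_nonneg (x i)

open Matrix in
lemma vg_symm_move (K : Matrix V V ℝ) (hs : Kᵀ = K) (x y : V → ℝ) :
    (K *ᵥ x) ⬝ᵥ y = x ⬝ᵥ K *ᵥ y := by
  rw [dotProduct_mulVec, ← mulVec_transpose, hs]

open Matrix in
lemma vg_symm_pow (K : Matrix V V ℝ) (hs : Kᵀ = K) (t : ℕ) : (K ^ t)ᵀ = K ^ t := by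
  rw [transpose_pow, hs]

open Matrix in
lemma vg_half_norm (K : Matrix V V ℝ) (hs : Kᵀ = K) (hp : ∀ x : V → ℝ, 0 ≤ x ⬝ᵥ K *ᵥ x)
    (l : ℝ) (hl : ∀ x : V → ℝ, x ⬝ᵥ K *ᵥ x ≤ l * (x ⬝ᵥ x)) (x : V → ℝ) :
    (K *ᵥ x) ⬝ᵥ (K *ᵥ x) ≤ l * (x ⬝ᵥ K *ᵥ x) := by
  have h1 := vg_psd_cs K hs hp x (K *ᵥ x)
  rw [← vg_symm_move K hs x] at h1
  have h2 := hl (K *ᵥ x)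
  have h3 := hp x
  set A := (K *ᵥ x) ⬝ᵥ (K *ᵥ x)
  have hA : 0 ≤ A := vg_mul_self_nonneg _
  have h4 : A * A ≤ A * (l * (x ⬝ᵥ K *ᵥ x)) := by
    nlinarith [mul_le_mul_of_nonneg_left h2 h3]
  rcases hA.eq_or_lt with h | h
  · rw [← h]
    rcases eq_or_ne (x ⬝ᵥ x) 0 with h0 | h0
    · have : x = 0 := by simpa using h0
      simp [this]
    · have hx : 0 < x ⬝ᵥ x := lt_of_le_of_ne (vg_mul_self_nonneg x) (Ne.symm h0)
      have : 0 ≤ l := by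
        by_contra hneg
        have := hl x
        nlinarith
      positivity
  · exact le_of_mul_le_mul_left h4 h

open Matrix in
lemma vg_norm_pow (K : Matrix V V ℝ) (hs : Kᵀ = K) (hp : ∀ x : V → ℝ, 0 ≤ x ⬝ᵥ K *ᵥ x)
    (l : ℝ) (hl0 : 0 ≤ l) (hl : ∀ x : V → ℝ, x ⬝ᵥ K *ᵥ x ≤ l * (x ⬝ᵥ x)) (x : V → ℝ) (t : ℕ) :
    (K ^ t *ᵥ x) ⬝ᵥ (K ^ t *ᵥ x) ≤ (l ^ t) ^ 2 * (x ⬝ᵥ x) := by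
  induction t with
  | zero => simp
  | succ t ih =>
    rw [pow_succ', ← mulVec_mulVec]
    have h1 := vg_half_norm K hs hp l hl (K ^ t *ᵥ x)
    have h2 := hl (K ^ t *ᵥ x)
    calc _ ≤ _ := h1
      _ ≤ l * (l * ((l ^ t) ^ 2 * (x ⬝ᵥ x))) := by gcongr; exact h2.trans (by gcongr)
      _ = _ := by ring

open Matrix in
lemma vg_pow_upper (K : Matrix V V ℝ) (hs : Kᵀ = K) (hp : ∀ x : V → ℝ, 0 ≤ x ⬝ᵥ K *ᵥ x)
    (l : ℝ) (hl0 : 0 ≤ l) (hl : ∀ x : V → ℝ, x ⬝ᵥ K *ᵥ x ≤ l * (x ⬝ᵥ x)) (x : V → ℝ) (t : ℕ) :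
    x ⬝ᵥ K ^ t *ᵥ x ≤ l ^ t * (x ⬝ᵥ x) := by
  have h1 := vg_cs x (K ^ t *ᵥ x)
  have h2 := vg_norm_pow K hs hp l hl0 hl x t
  have h3 := vg_mul_self_nonneg x
  have h4 : (x ⬝ᵥ K ^ t *ᵥ x) ^ 2 ≤ (l ^ t * (x ⬝ᵥ x)) ^ 2 := by
    nlinarith [mul_le_mul_of_nonneg_left h2 h3]
  exact (abs_le_of_sq_le_sq' h4 (by positivity)).2

open Matrix in
lemma vg_pow_lower (K : Matrix V V ℝ) (hs : Kᵀ = K) (hp : ∀ x : V → ℝ, 0 ≤ x ⬝ᵥ K *ᵥ x)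
    (f : V → ℝ) (l : ℝ) (hl0 : 0 < l) (hf : 0 < f ⬝ᵥ f) (hl : l * (f ⬝ᵥ f) ≤ f ⬝ᵥ K *ᵥ f) (t : ℕ) :
    l ^ t * (f ⬝ᵥ f) ≤ f ⬝ᵥ K ^ t *ᵥ f := by
  have key : ∀ i j : ℕ, (K ^ i *ᵥ f) ⬝ᵥ (K ^ j *ᵥ f) = f ⬝ᵥ K ^ (i + j) *ᵥ f := by
    intro i j
    rw [vg_symm_move _ (vg_symm_pow K hs i), mulVec_mulVec, pow_add]
  have conv : ∀ t, (f ⬝ᵥ K ^ (t + 1) *ᵥ f) ^ 2 ≤ (f ⬝ᵥ K ^ t *ᵥ f) * (f ⬝ᵥ K ^ (t + 2) *ᵥ f) := by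
    intro t
    rcases Nat.even_or_odd' t with ⟨j, rfl | rfl⟩
    · have := vg_cs (K ^ j *ᵥ f) (K ^ (j + 1) *ᵥ f)
      rw [key, key, key] at this
      rwa [show j + (j + 1) = 2 * j + 1 by ring, show j + j = 2 * j by ring,
        show j + 1 + (j + 1) = 2 * j + 2 by ring] at this
    · have := vg_psd_cs K hs hp (K ^ j *ᵥ f) (K ^ (j + 1) *ᵥ f)
      simp only [mulVec_mulVec, ← pow_succ', key] at this
      rwa [show j + (j + 1 + 1) = 2 * j + 1 + 1 by ring, show j + (j + 1) = 2 * j + 1 by ring,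
        show j + 1 + (j + 1 + 1) = 2 * j + 1 + 2 by ring] at this
  have main : ∀ t, 0 < f ⬝ᵥ K ^ t *ᵥ f ∧ l * (f ⬝ᵥ K ^ t *ᵥ f) ≤ f ⬝ᵥ K ^ (t + 1) *ᵥ f := by
    intro t
    induction t with
    | zero => simpa using ⟨hf, hl⟩
    | succ t ih =>
      obtain ⟨h1, h2⟩ := ih
      have h3 : 0 < f ⬝ᵥ K ^ (t + 1) *ᵥ f := lt_of_lt_of_le (by positivity) h2
      refine ⟨h3, ?_⟩
      have h4 := conv t
      have h5 : (f ⬝ᵥ K ^ t *ᵥ f) * (l * (f ⬝ᵥ K ^ (t + 1) *ᵥ f)) ≤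
          (f ⬝ᵥ K ^ t *ᵥ f) * (f ⬝ᵥ K ^ (t + 2) *ᵥ f) := by nlinarith
      exact le_of_mul_le_mul_left h5 h1
  induction t with
  | zero => simp
  | succ t ih =>
    calc l ^ (t + 1) * (f ⬝ᵥ f) = l * (l ^ t * (f ⬝ᵥ f)) := by ring
      _ ≤ l * (f ⬝ᵥ K ^ t *ᵥ f) := by gcongr
      _ ≤ _ := (main t).2

/-- Symmetric stochastic matrices. -/
structure VgStoch (B : Matrix V V ℝ) : Prop where
  symm : B.transpose = B
  nonneg : ∀ u v, 0 ≤ B u v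
  row : ∀ u, ∑ v, B u v = 1

lemma VgStoch.app {B : Matrix V V ℝ} (h : VgStoch B) (u v : V) : B u v = B v u := by
  conv_lhs => rw [← h.symm]
  rfl

lemma VgStoch.col {B : Matrix V V ℝ} (h : VgStoch B) (v : V) : ∑ u, B u v = 1 := by
  rw [← h.row v]
  exact Finset.sum_congr rfl fun u _ => h.app u v

open Matrix in
lemma VgStoch.sum_mulVec {B : Matrix V V ℝ} (h : VgStoch B) (x : V → ℝ) :
    ∑ u, (B *ᵥ x) u = ∑ u, x u := by
  simp only [mulVec, dotProduct]
  rw [Finset.sum_comm]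
  refine Finset.sum_congr rfl fun v _ => ?_
  rw [← Finset.sum_mul, h.col, one_mul]

lemma VgStoch.pow {B : Matrix V V ℝ} (h : VgStoch B) (m : ℕ) : VgStoch (B ^ m) := by
  induction m with
  | zero =>
    refine ⟨by simp, fun u v => ?_, fun u => ?_⟩
    · rw [pow_zero, Matrix.one_apply]; split_ifs <;> norm_num
    · simp [Matrix.one_apply]
  | succ m ih =>
    refine ⟨vg_symm_pow B h.symm _, fun u v => ?_, fun u => ?_⟩
    · rw [pow_succ, Matrix.mul_apply]
      exact Finset.sum_nonneg fun w _ => mul_nonneg (ih.nonneg _ _) (h.nonneg _ _)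
    · rw [pow_succ]
      simp only [Matrix.mul_apply]
      rw [Finset.sum_comm]
      simp only [← Finset.mul_sum, h.row, mul_one, ih.row]

lemma VgStoch.pow_le {B : Matrix V V ℝ} (h : VgStoch B) (q : ℝ) (hq : ∀ u v, B u v ≤ q) (m : ℕ)
    (hm : 1 ≤ m) (u v : V) : (B ^ m) u v ≤ q := by
  obtain ⟨k, rfl⟩ : ∃ k, m = k + 1 := ⟨m - 1, by omega⟩
  rw [pow_succ, Matrix.mul_apply]
  calc ∑ w, (B ^ k) u w * B w v ≤ ∑ w, (B ^ k) u w * q :=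
        Finset.sum_le_sum fun w _ => mul_le_mul_of_nonneg_left (hq _ _) ((h.pow k).nonneg _ _)
    _ = q := by rw [← Finset.sum_mul, (h.pow k).row, one_mul]

open Matrix in
lemma VgStoch.abs_form {B : Matrix V V ℝ} (h : VgStoch B) (x : V → ℝ) :
    |x ⬝ᵥ B *ᵥ x| ≤ x ⬝ᵥ x := by
  have e1 : x ⬝ᵥ B *ᵥ x = ∑ u, ∑ v, x u * B u v * x v := by
    simp only [dotProduct, mulVec, Finset.mul_sum]
    exact Finset.sum_congr rfl fun u _ => Finset.sum_congr rfl fun v _ => by ring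
  have e2 : x ⬝ᵥ x = ∑ u, ∑ v, B u v * ((x u * x u + x v * x v) / 2) := by
    have a1 : ∑ u, ∑ v, B u v * (x u * x u) = x ⬝ᵥ x := by
      simp only [← Finset.sum_mul, h.row, one_mul]; rfl
    have a2 : ∑ u, ∑ v, B u v * (x v * x v) = x ⬝ᵥ x := by
      rw [Finset.sum_comm]
      simp only [← Finset.sum_mul, h.col, one_mul]; rfl
    have : ∑ u, ∑ v, B u v * ((x u * x u + x v * x v) / 2) =
      (∑ u, ∑ v, B u v * (x u * x u) + ∑ u, ∑ v, B u v * (x v * x v)) / 2 := by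
      rw [← Finset.sum_add_distrib, Finset.sum_div]
      refine Finset.sum_congr rfl fun u _ => ?_
      rw [← Finset.sum_add_distrib, Finset.sum_div]
      exact Finset.sum_congr rfl fun v _ => by ring
    rw [this, a1, a2]; ring
  rw [abs_le, e1, e2, ← Finset.sum_neg_distrib]
  constructor
  · refine Finset.sum_le_sum fun u _ => ?_
    rw [← Finset.sum_neg_distrib]
    refine Finset.sum_le_sum fun v _ => ?_
    nlinarith [mul_nonneg (h.nonneg u v) (sq_nonneg (x u + x v))]
  · refine Finset.sum_le_sum fun u _ => Finset.sum_le_sum fun v _ => ?_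
    nlinarith [mul_nonneg (h.nonneg u v) (sq_nonneg (x u - x v))]

/-- mixing -/
lemma vg_mixing (M : Matrix V V ℝ) (h : VgStoch M)
    (hp : ∀ x : V → ℝ, 0 ≤ dotProduct x (M.mulVec x)) (g : ℝ) (hg : g ≤ 1)
    (hgap : ∀ x : V → ℝ, ∑ v, x v = 0 → dotProduct x (M.mulVec x) ≤ (1 - g) * dotProduct x x)
    (T : ℕ) (u v : V) :
    ((M ^ T) u v - (Fintype.card V : ℝ)⁻¹) ^ 2 ≤ (1 - g) ^ T := by
  have hN : (Fintype.card V : ℝ) ≠ 0 := by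
    have : 0 < Fintype.card V := Fintype.card_pos_iff.mpr ⟨u⟩
    positivity
  have step : ∀ x : V → ℝ, ∑ v, x v = 0 → ∀ T : ℕ, (∑ v, (M ^ T).mulVec x v = 0) ∧
      dotProduct ((M ^ T).mulVec x) ((M ^ T).mulVec x) ≤ (1 - g) ^ T * dotProduct x x := by
    intro x hx T
    induction T with
    | zero => simp [hx]
    | succ T ih =>
      obtain ⟨i1, i2⟩ := ih
      rw [pow_succ', ← Matrix.mulVec_mulVec]
      refine ⟨by rw [h.sum_mulVec, i1], ?_⟩
      have h1 := vg_half_norm M h.symm hp 1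
        (fun x => by rw [one_mul]; exact (le_abs_self _).trans (h.abs_form x)) ((M ^ T).mulVec x)
      have h2 := hgap _ i1
      have h3 : 0 ≤ 1 - g := by linarith
      calc _ ≤ _ := h1
        _ ≤ (1 - g) * ((1 - g) ^ T * dotProduct x x) := by
            rw [one_mul]; exact h2.trans (by gcongr)
        _ = _ := by ring
  let x : V → ℝ := fun w => (if w = v then 1 else 0) - (Fintype.card V : ℝ)⁻¹
  have hx : ∑ w, x w = 0 := by
    simp [x, Finset.sum_sub_distrib, hN]
  have hxx : dotProduct x x ≤ 1 := by
    have : dotProduct x x = ∑ w, ((if w = v then (1 : ℝ) else 0) * (1 - 2 * (Fintype.card V : ℝ)⁻¹)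
        + (Fintype.card V : ℝ)⁻¹ ^ 2) := by
      refine Finset.sum_congr rfl fun w _ => ?_
      simp only [x]; split_ifs <;> ring
    rw [this, Finset.sum_add_distrib, ← Finset.sum_mul]
    simp only [Finset.sum_ite_eq', Finset.mem_univ, if_true, Finset.sum_const, Finset.card_univ,
      nsmul_eq_mul]
    have : (Fintype.card V : ℝ) * (Fintype.card V : ℝ)⁻¹ ^ 2 = (Fintype.card V : ℝ)⁻¹ := by
      field_simp
    rw [this]
    have : 0 ≤ (Fintype.card V : ℝ)⁻¹ := by positivity
    linarith
  have happ : (M ^ T).mulVec x u = (M ^ T) u v - (Fintype.card V : ℝ)⁻¹ := by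
    simp only [Matrix.mulVec, dotProduct, x, mul_sub, Finset.sum_sub_distrib, ← Finset.sum_mul,
      (h.pow T).row]
    simp
  rw [← happ, sq]
  calc (M ^ T).mulVec x u * (M ^ T).mulVec x u
      ≤ dotProduct ((M ^ T).mulVec x) ((M ^ T).mulVec x) :=
        Finset.single_le_sum (f := fun i => (M ^ T).mulVec x i * (M ^ T).mulVec x i)
          (fun i _ => mul_self_nonneg _) (Finset.mem_univ u)
    _ ≤ (1 - g) ^ T * dotProduct x x := (step x hx T).2
    _ ≤ (1 - g) ^ T * 1 := by
        have h3 : 0 ≤ 1 - g := by linarith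
        gcongr
    _ = _ := mul_one _

lemma vg_real (s N W e m err γ A D κ : ℝ) (hs : 0 < s) (hN : 0 < N) (hW : 0 ≤ W) (hD : 0 < D)
    (hκ : 0 ≤ κ) (hγ : 0 < γ) (hA : 0 ≤ A) (he : 0 ≤ e)
    (h1 : W - N * m ^ 2 ≤ e / (2 * γ)) (h1' : N * m ^ 2 ≤ W)
    (h2 : (s * m + err) ^ 2 ≤ e * (s + 4 * s ^ 2 / D))
    (h3 : err ^ 2 ≤ (W - N * m ^ 2) * (s ^ 2 * A)) (k1 : 4 * s / D ≤ κ) (k2 : s / (2 * γ * N) ≤ κ)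
    (k3 : s * A / (2 * γ) ≤ κ ^ 2) : s / N * (1 - 4 * κ) * W ≤ e := by
  by_cases hc : s / N * W ≤ e
  · refine le_trans ?_ hc
    have : 0 ≤ s / N * W := by positivity
    nlinarith
  push Not at hc
  set P := s ^ 2 * W / N with hP
  have hP0 : 0 ≤ P := by positivity
  have a1 : W - N * m ^ 2 ≤ s / N * W / (2 * γ) := h1.trans (by gcongr)
  have a2 : s / N * W / (2 * γ) = s / (2 * γ * N) * W := by field_simp
  have a3 : W - N * m ^ 2 ≤ κ * W := by
    rw [a2] at a1; exact a1.trans (by gcongr)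
  have a4 : err ^ 2 ≤ P * κ ^ 2 := by
    calc err ^ 2 ≤ _ := h3
      _ ≤ s / N * W / (2 * γ) * (s ^ 2 * A) := by gcongr
      _ = P * (s * A / (2 * γ)) := by rw [hP]; field_simp
      _ ≤ _ := by gcongr
  have a5 : (s * m) ^ 2 ≤ P := by
    rw [hP, le_div_iff₀ hN]
    nlinarith [mul_le_mul_of_nonneg_left h1' (sq_nonneg s)]
  have a6 : (1 - κ) * P ≤ (s * m) ^ 2 := by
    rw [hP, ← mul_div_assoc, div_le_iff₀ hN]
    nlinarith [mul_le_mul_of_nonneg_left a3 (sq_nonneg s)]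
  have a7 : (s * m * err) ^ 2 ≤ (P * κ) ^ 2 := by
    rw [mul_pow]
    calc (s * m) ^ 2 * err ^ 2 ≤ P * (P * κ ^ 2) := by gcongr
      _ = _ := by ring
  have a8 := (abs_le_of_sq_le_sq' a7 (by positivity)).1
  have a9 : (1 - 3 * κ) * P ≤ e * (s + 4 * s ^ 2 / D) := by nlinarith [sq_nonneg err]
  have a10 : e * (s + 4 * s ^ 2 / D) ≤ e * s * (1 + κ) := by
    have : s + 4 * s ^ 2 / D = s * (1 + 4 * s / D) := by field_simp
    rw [this, ← mul_assoc]
    gcongr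
  have a11 : (1 - 3 * κ) * (s / N * W) ≤ e * (1 + κ) := by
    have : s * ((1 - 3 * κ) * (s / N * W)) ≤ s * (e * (1 + κ)) := by
      calc s * ((1 - 3 * κ) * (s / N * W)) = (1 - 3 * κ) * P := by rw [hP]; ring
        _ ≤ _ := a9.trans (a10.trans (le_of_eq (by ring)))
    exact le_of_mul_le_mul_left this hs
  have hq : 0 ≤ s / N * W := by positivity
  have : (s / N * (1 - 4 * κ) * W) * (1 + κ) ≤ e * (1 + κ) := by
    refine le_trans ?_ a11
    nlinarith [mul_nonneg hq (sq_nonneg κ)]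
  exact le_of_mul_le_mul_right this (by linarith)

open Matrix in
/-- The Dirichlet eigenvalue lower bound. -/
lemma vg_dirichlet (B : Matrix V V ℝ) (h : VgStoch B) (D γ A κ : ℝ) (hD : 0 < D) (hγ : 0 < γ)
    (hA : 0 ≤ A) (hκ : 0 ≤ κ) (hBD : ∀ u v, B u v ≤ D⁻¹) (hBA : ∀ u v, (B ^ 10) u v ≤ A)
    (hgap : ∀ x : V → ℝ, ∑ v, x v = 0 → 2 * γ * (x ⬝ᵥ x) ≤ x ⬝ᵥ x - x ⬝ᵥ B *ᵥ x)
    (S : Finset V) (hS : S.Nonempty) (k1 : 4 * (S.card : ℝ) / D ≤ κ)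
    (k2 : (S.card : ℝ) / (2 * γ * Fintype.card V) ≤ κ) (k3 : (S.card : ℝ) * A / (2 * γ) ≤ κ ^ 2)
    (g : V → ℝ) (hg : ∀ v ∈ S, g v = 0) :
    (S.card : ℝ) / Fintype.card V * (1 - 4 * κ) * (g ⬝ᵥ g) ≤ g ⬝ᵥ g - g ⬝ᵥ B *ᵥ g := by
  obtain ⟨v0, hv0⟩ := hS
  have hN : (0 : ℝ) < Fintype.card V := by
    have : 0 < Fintype.card V := Fintype.card_pos_iff.mpr ⟨v0⟩
    positivity
  have hs : (0 : ℝ) < S.card := by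
    have : 0 < S.card := Finset.card_pos.mpr ⟨v0, hv0⟩
    positivity
  set N : ℝ := (Fintype.card V : ℝ) with hNdef
  set s : ℝ := (S.card : ℝ) with hsdef
  let f : V → ℝ := fun v => if v ∈ S then 1 else 0
  let ψ : V → ℝ := ∑ i ∈ Finset.range 5, (B ^ i) *ᵥ f
  let Q : Matrix V V ℝ := 1 - B
  have hQs : Qᵀ = Q := by simp [Q, h.symm]
  have hQf : ∀ x y : V → ℝ, x ⬝ᵥ Q *ᵥ y = x ⬝ᵥ y - x ⬝ᵥ B *ᵥ y := by
    intro x y; simp [Q, sub_mulVec, dotProduct_sub]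
  have hQp : ∀ x : V → ℝ, 0 ≤ x ⬝ᵥ Q *ᵥ x := by
    intro x; rw [hQf]; have := (le_abs_self _).trans (h.abs_form x); linarith
  have hQψ : Q *ᵥ ψ = f - (B ^ 5) *ᵥ f := by
    simp only [Q, ψ, mulVec_sum, mulVec_mulVec, sub_mul, one_mul, ← pow_succ', sub_mulVec]
    rw [Finset.sum_range_sub' (fun i => (B ^ i) *ᵥ f)]
    simp
  have hf0 : ∀ v, 0 ≤ f v := fun v => by simp only [f]; split_ifs <;> norm_num
  have hgf : g ⬝ᵥ f = 0 := by
    refine Finset.sum_eq_zero fun v _ => ?_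
    by_cases hv : v ∈ S
    · simp [hg v hv]
    · simp [f, hv]
  have hff : f ⬝ᵥ f = s := by simp [dotProduct, f, hsdef]
  have hfsum : ∑ v, f v = s := by simp [f, hsdef]
  have hfB : ∀ (C : Matrix V V ℝ) (q : ℝ), (∀ u v, C u v ≤ q) → f ⬝ᵥ C *ᵥ f ≤ s ^ 2 * q := by
    intro C q hC
    calc f ⬝ᵥ C *ᵥ f ≤ ∑ u, ∑ v, f u * (q * f v) := by
          simp only [dotProduct, mulVec, Finset.mul_sum]
          refine Finset.sum_le_sum fun u _ => Finset.sum_le_sum fun v _ => ?_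
          exact mul_le_mul_of_nonneg_left (mul_le_mul_of_nonneg_right (hC u v) (hf0 v)) (hf0 u)
      _ = s ^ 2 * q := by
          simp only [← Finset.mul_sum, ← Finset.sum_mul, hfsum]; ring
  set e := g ⬝ᵥ g - g ⬝ᵥ B *ᵥ g with he
  have he0 : 0 ≤ e := by rw [he, ← hQf]; exact hQp g
  set m := (∑ v, g v) / N with hm
  let y : V → ℝ := fun v => g v - m
  have hysum : ∑ v, y v = 0 := by
    simp only [y, Finset.sum_sub_distrib, Finset.sum_const, Finset.card_univ, nsmul_eq_mul]
    rw [← hNdef, hm]; field_simp; ring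
  have hgsum : ∑ v, g v = N * m := by rw [hm]; field_simp
  have hyy : y ⬝ᵥ y = g ⬝ᵥ g - N * m ^ 2 := by
    have : y ⬝ᵥ y = ∑ v, (g v * g v - 2 * m * g v + m ^ 2) :=
      Finset.sum_congr rfl fun v _ => by simp only [y]; ring
    rw [this, Finset.sum_add_distrib, Finset.sum_sub_distrib, ← Finset.mul_sum, hgsum]
    simp only [Finset.sum_const, Finset.card_univ, nsmul_eq_mul, ← hNdef, dotProduct]
    ring
  have hgy : g = y + fun _ => m := by funext v; simp [y]
  have hBc : B *ᵥ (fun _ : V => m) = fun _ => m := by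
    funext u; simp [mulVec, dotProduct, ← Finset.sum_mul, h.row]
  have hcB : ∀ x : V → ℝ, (fun _ : V => m) ⬝ᵥ x = m * ∑ v, x v := by
    intro x; simp [dotProduct, Finset.mul_sum]
  have hey : e = y ⬝ᵥ y - y ⬝ᵥ B *ᵥ y := by
    rw [he, hgy]
    have z1 : y ⬝ᵥ (fun _ : V => m) = 0 := by rw [dotProduct_comm, hcB, hysum, mul_zero]
    have z2 : (fun _ : V => m) ⬝ᵥ y = 0 := by rw [hcB, hysum, mul_zero]
    have z3 : (fun _ : V => m) ⬝ᵥ B *ᵥ y = 0 := by rw [hcB, h.sum_mulVec, hysum, mul_zero]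
    simp only [mulVec_add, dotProduct_add, add_dotProduct, hBc, z1, z2, z3]
    ring
  have hy0 := vg_mul_self_nonneg y
  have b1 : g ⬝ᵥ g - N * m ^ 2 ≤ e / (2 * γ) := by
    rw [le_div_iff₀ (by positivity), ← hyy, hey]
    have := hgap y hysum
    linarith
  have b1' : N * m ^ 2 ≤ g ⬝ᵥ g := by linarith
  let err : ℝ := y ⬝ᵥ (B ^ 5) *ᵥ f
  have c1 : g ⬝ᵥ Q *ᵥ ψ = -(s * m + err) := by
    rw [hQψ, dotProduct_sub, hgf]
    have : g ⬝ᵥ (B ^ 5) *ᵥ f = err + m * s := by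
      conv_lhs => rw [hgy]
      rw [add_dotProduct, hcB, (h.pow 5).sum_mulVec, hfsum]
    rw [this]; ring
  have c2 : ψ ⬝ᵥ Q *ᵥ ψ ≤ s + 4 * s ^ 2 / D := by
    have d1 : 0 ≤ ψ ⬝ᵥ (B ^ 5) *ᵥ f := by
      have nn : ∀ (i : ℕ) v, 0 ≤ ((B ^ i) *ᵥ f) v := fun i v =>
        Finset.sum_nonneg fun w _ => mul_nonneg ((h.pow i).nonneg _ _) (hf0 w)
      refine Finset.sum_nonneg fun v _ => mul_nonneg ?_ (nn 5 v)
      simp only [ψ, Finset.sum_apply]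
      exact Finset.sum_nonneg fun i _ => nn i v
    have d2 : ψ ⬝ᵥ f ≤ s + 4 * s ^ 2 / D := by
      rw [dotProduct_comm]
      simp only [ψ, dotProduct_sum]
      rw [Finset.sum_range_succ']
      have : ∀ i ∈ Finset.range 4, f ⬝ᵥ (B ^ (i + 1)) *ᵥ f ≤ s ^ 2 * D⁻¹ := fun i _ =>
        hfB _ _ (h.pow_le _ hBD (i + 1) (by omega))
      have := Finset.sum_le_sum this
      simp only [Finset.sum_const, Finset.card_range, nsmul_eq_mul] at this
      simp only [pow_zero, one_mulVec, hff]
      push_cast at this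
      have e4 : 4 * s ^ 2 / D = 4 * (s ^ 2 * D⁻¹) := by rw [div_eq_mul_inv]; ring
      linarith
    rw [hQψ, dotProduct_sub]
    linarith
  have b2 : (s * m + err) ^ 2 ≤ e * (s + 4 * s ^ 2 / D) := by
    have := vg_psd_cs Q hQs hQp g ψ
    rw [c1, hQf g g, ← he] at this
    calc (s * m + err) ^ 2 = (-(s * m + err)) ^ 2 := by ring
      _ ≤ _ := this
      _ ≤ _ := by gcongr
  have b3 : err ^ 2 ≤ (g ⬝ᵥ g - N * m ^ 2) * (s ^ 2 * A) := by
    rw [← hyy]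
    refine (vg_cs y ((B ^ 5) *ᵥ f)).trans ?_
    rw [vg_symm_move _ (vg_symm_pow B h.symm 5), mulVec_mulVec, ← pow_add]
    exact mul_le_mul_of_nonneg_left (hfB _ _ hBA) hy0
  exact vg_real s N (g ⬝ᵥ g) e m err γ A D κ hs hN (vg_mul_self_nonneg g) hD hκ hγ hA he0 b1 b1'
    b2 b3 k1 k2 k3

/-- The matrix killed on `S`. -/
def vgKill (M : Matrix V V ℝ) (S : Finset V) : Matrix V V ℝ :=
  Matrix.of fun u v => (if u ∈ S then 0 else 1) * M u v * (if v ∈ S then 0 else 1)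

def vgInd (S : Finset V) : V → ℝ := fun v => if v ∈ S then 0 else 1

/-- Probability that `S` is avoided for times `0..t`. -/
def vgAvoid (M : Matrix V V ℝ) (S : Finset V) : ℕ → V → ℝ
  | 0 => vgInd S
  | t + 1 => fun u => vgInd S u * ∑ v, M u v * vgAvoid M S t v

lemma vgInd_sq (S : Finset V) (v : V) : vgInd S v * vgInd S v = vgInd S v := by
  unfold vgInd; split_ifs <;> norm_num

lemma vgInd_nonneg (S : Finset V) (v : V) : 0 ≤ vgInd S v := by
  unfold vgInd; split_ifs <;> norm_num

lemma vgAvoid_ind (M : Matrix V V ℝ) (S : Finset V) (t : ℕ) (u : V) :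
    vgInd S u * vgAvoid M S t u = vgAvoid M S t u := by
  cases t with
  | zero => exact vgInd_sq S u
  | succ t => simp only [vgAvoid]; rw [← mul_assoc, vgInd_sq]

lemma vgAvoid_nonneg (M : Matrix V V ℝ) (h : VgStoch M) (S : Finset V) (t : ℕ) (u : V) :
    0 ≤ vgAvoid M S t u := by
  induction t generalizing u with
  | zero => exact vgInd_nonneg S u
  | succ t ih =>
    exact mul_nonneg (vgInd_nonneg S u) (Finset.sum_nonneg fun v _ => mul_nonneg (h.nonneg _ _) (ih v))

open Matrix in
lemma vgKill_mulVec (M : Matrix V V ℝ) (S : Finset V) (x : V → ℝ) (u : V) :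
    (vgKill M S *ᵥ x) u = vgInd S u * ∑ v, M u v * (vgInd S v * x v) := by
  simp only [mulVec, dotProduct, vgKill, Matrix.of_apply, Finset.mul_sum]
  exact Finset.sum_congr rfl fun v _ => by unfold vgInd; ring

open Matrix in
lemma vgAvoid_eq (M : Matrix V V ℝ) (S : Finset V) (t : ℕ) :
    vgAvoid M S t = (vgKill M S ^ t) *ᵥ vgInd S := by
  induction t with
  | zero => simp [vgAvoid]
  | succ t ih =>
    rw [pow_succ', ← mulVec_mulVec, ← ih]
    funext u
    rw [vgKill_mulVec]
    simp only [vgAvoid_ind]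
    rfl

open Matrix in
lemma vgAvoid_sum (M : Matrix V V ℝ) (S : Finset V) (t : ℕ) :
    ∑ u, vgAvoid M S t u = vgInd S ⬝ᵥ (vgKill M S ^ t) *ᵥ vgInd S := by
  rw [← vgAvoid_eq]
  exact Finset.sum_congr rfl fun u _ => (vgAvoid_ind M S t u).symm

open Matrix in
lemma vgKill_form (M : Matrix V V ℝ) (S : Finset V) (x : V → ℝ) :
    x ⬝ᵥ vgKill M S *ᵥ x = (fun v => vgInd S v * x v) ⬝ᵥ M *ᵥ (fun v => vgInd S v * x v) := by
  simp only [dotProduct, vgKill_mulVec]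
  exact Finset.sum_congr rfl fun u _ => by simp only [mulVec, dotProduct]; ring

lemma vgKill_symm (M : Matrix V V ℝ) (h : VgStoch M) (S : Finset V) :
    (vgKill M S).transpose = vgKill M S := by
  ext u v
  simp only [Matrix.transpose_apply, vgKill, Matrix.of_apply, h.app v u]
  ring

lemma vgInd_dot (S : Finset V) :
    dotProduct (vgInd S) (vgInd S) = (Fintype.card V : ℝ) - S.card := by
  have : dotProduct (vgInd S) (vgInd S) = ∑ v, (1 - if v ∈ S then (1 : ℝ) else 0) := by
    refine Finset.sum_congr rfl fun v _ => ?_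
    rw [vgInd_sq]; unfold vgInd; split_ifs <;> norm_num
  rw [this, Finset.sum_sub_distrib]
  simp

open Matrix in
lemma vgAvoid_upper (M : Matrix V V ℝ) (h : VgStoch M) (hp : ∀ x : V → ℝ, 0 ≤ x ⬝ᵥ M *ᵥ x)
    (S : Finset V) (l : ℝ) (hl0 : 0 ≤ l)
    (hl : ∀ g : V → ℝ, (∀ v ∈ S, g v = 0) → g ⬝ᵥ M *ᵥ g ≤ l * (g ⬝ᵥ g)) (t : ℕ) :
    ∑ u, vgAvoid M S t u ≤ l ^ t * Fintype.card V := by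
  rw [vgAvoid_sum]
  refine (vg_pow_upper (vgKill M S) (vgKill_symm M h S) (fun x => ?_) l hl0 (fun x => ?_) _ t).trans ?_
  · rw [vgKill_form]; exact hp _
  · rw [vgKill_form]
    refine (hl _ fun v hv => by simp [vgInd, hv]).trans ?_
    refine mul_le_mul_of_nonneg_left ?_ hl0
    refine Finset.sum_le_sum fun v _ => ?_
    simp only [vgInd]; split_ifs
    · simpa using mul_self_nonneg (x v)
    · simp
  · rw [vgInd_dot]
    have : (0 : ℝ) ≤ S.card := by positivity
    have : 0 ≤ l ^ t := by positivity
    nlinarith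

open Matrix in
lemma vgAvoid_lower (M : Matrix V V ℝ) (h : VgStoch M) (hp : ∀ x : V → ℝ, 0 ≤ x ⬝ᵥ M *ᵥ x)
    (hdiag : ∀ v, (2 : ℝ)⁻¹ ≤ M v v)
    (S : Finset V) (hS : 3 * (S.card : ℝ) < 2 * Fintype.card V) (t : ℕ) :
    (1 - S.card / (2 * (Fintype.card V - S.card))) ^ t * ((Fintype.card V : ℝ) - S.card) ≤
      ∑ u, vgAvoid M S t u := by
  rw [vgAvoid_sum, ← vgInd_dot]
  have hs : (0 : ℝ) ≤ S.card := by positivity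
  have hpos : (0 : ℝ) < Fintype.card V - S.card := by linarith
  refine vg_pow_lower (vgKill M S) (vgKill_symm M h S) (fun x => ?_) _ _ ?_ ?_ ?_ t
  · rw [vgKill_form]; exact hp _
  · rw [vgInd_dot, sub_pos, div_lt_one (by positivity)]; linarith
  · rw [vgInd_dot]; exact hpos
  · rw [vgInd_dot, vgKill_form]
    have e0 : (fun v => vgInd S v * vgInd S v) = vgInd S := funext (vgInd_sq S)
    rw [e0]
    have e1 : (1 - (S.card : ℝ) / (2 * (Fintype.card V - S.card))) * ((Fintype.card V : ℝ) - S.card)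
        = Fintype.card V - S.card - S.card / 2 := by field_simp
    rw [e1]
    let f : V → ℝ := fun v => if v ∈ S then 1 else 0
    have hf : ∑ v, f v = S.card := by simp [f]
    have e2 : vgInd S ⬝ᵥ M *ᵥ vgInd S = ∑ u, ∑ v, (M u v - f u * M u v - f v * M u v
        + f u * f v * M u v) := by
      simp only [dotProduct, mulVec, Finset.mul_sum]
      refine Finset.sum_congr rfl fun u _ => Finset.sum_congr rfl fun v _ => ?_
      simp only [vgInd, f]
      split_ifs <;> ring
    rw [e2]
    simp only [Finset.sum_add_distrib, Finset.sum_sub_distrib]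
    have e3 : ∑ u, ∑ v, M u v = (Fintype.card V : ℝ) := by simp [h.row]
    have e4 : ∑ u, ∑ v, f u * M u v = S.card := by simp [← Finset.mul_sum, h.row, hf]
    have e5 : ∑ u, ∑ v, f v * M u v = S.card := by
      rw [Finset.sum_comm]; simp [← Finset.mul_sum, h.col, hf]
    have e6 : (S.card : ℝ) / 2 ≤ ∑ u, ∑ v, f u * f v * M u v := by
      calc (S.card : ℝ) / 2 = ∑ u, f u * 2⁻¹ := by rw [← Finset.sum_mul, hf]; ring
        _ ≤ ∑ u, f u * f u * M u u := by
            refine Finset.sum_le_sum fun u _ => ?_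
            simp only [f]; split_ifs
            · simpa using hdiag u
            · simp
        _ ≤ _ := by
            refine Finset.sum_le_sum fun u _ => ?_
            refine Finset.single_le_sum (f := fun v => f u * f v * M u v) (fun v _ => ?_)
              (Finset.mem_univ u)
            have : ∀ v, 0 ≤ f v := fun v => by simp only [f]; split_ifs <;> norm_num
            exact mul_nonneg (mul_nonneg (this _) (this _)) (h.nonneg _ _)
    linarith

lemma vg_simple_stoch (G : SimpleGraph V) (d : ℕ) (hd : 0 < d)
    (hdeg : ∀ v, ((univ : Finset V).filter fun w => G.Adj v w).card = d) :
    VgStoch (simpleStep G d) := by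
  refine ⟨?_, fun u v => ?_, fun u => ?_⟩
  · ext u v; simp [simpleStep, G.adj_comm]
  · simp only [simpleStep, Matrix.of_apply]; split_ifs <;> positivity
  · simp only [simpleStep, Matrix.of_apply]
    rw [← Finset.sum_filter, Finset.sum_const, hdeg]
    have : (d : ℝ) ≠ 0 := by positivity
    simp [this]

lemma vg_lazy_apply (G : SimpleGraph V) (d : ℕ) (u v : V) :
    lazyStep G d u v = (if u = v then (2 : ℝ)⁻¹ else 0) + 2⁻¹ * simpleStep G d u v := rfl

lemma vg_lazy_eq (G : SimpleGraph V) (d : ℕ) :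
    lazyStep G d = (2 : ℝ)⁻¹ • (1 + simpleStep G d) := by
  ext u v
  rw [vg_lazy_apply]
  simp only [Matrix.smul_apply, Matrix.add_apply, Matrix.one_apply, smul_eq_mul]
  split_ifs <;> ring

open Matrix in
lemma vg_lazy_form (G : SimpleGraph V) (d : ℕ) (x : V → ℝ) :
    x ⬝ᵥ lazyStep G d *ᵥ x = (x ⬝ᵥ x + x ⬝ᵥ simpleStep G d *ᵥ x) / 2 := by
  rw [vg_lazy_eq, smul_mulVec, add_mulVec, one_mulVec, dotProduct_smul, dotProduct_add]
  simp only [smul_eq_mul]; ring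

lemma vg_lazy_stoch (G : SimpleGraph V) (d : ℕ) (h : VgStoch (simpleStep G d)) :
    VgStoch (lazyStep G d) := by
  refine ⟨?_, fun u v => ?_, fun u => ?_⟩
  · rw [vg_lazy_eq]; simp [h.symm]
  · rw [vg_lazy_apply]
    have := h.nonneg u v
    split_ifs <;> positivity
  · simp only [vg_lazy_apply, Finset.sum_add_distrib, ← Finset.mul_sum, h.row]
    simp; norm_num

open Matrix in
lemma vg_lazy_psd (G : SimpleGraph V) (d : ℕ) (h : VgStoch (simpleStep G d)) (x : V → ℝ) :
    0 ≤ x ⬝ᵥ lazyStep G d *ᵥ x := by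
  rw [vg_lazy_form]
  have := (abs_le.mp (h.abs_form x)).1
  linarith

lemma vg_lazy_diag (G : SimpleGraph V) (d : ℕ) (v : V) : (2 : ℝ)⁻¹ ≤ lazyStep G d v v := by
  rw [vg_lazy_apply]; simp [simpleStep]

lemma vg_gap_form (G : SimpleGraph V) (d : ℕ) (g : ℝ) (h : SpectralGapLB G d g) (x : V → ℝ)
    (hx : ∑ v, x v = 0) :
    dotProduct x ((lazyStep G d).mulVec x) ≤ (1 - g) * dotProduct x x := by
  have := h x hx
  have e1 : dotProduct x ((lazyStep G d).mulVec x) = ∑ u, ∑ v, x u * lazyStep G d u v * x v := by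
    simp only [dotProduct, Matrix.mulVec, Finset.mul_sum, mul_assoc]
  rw [e1]
  simpa only [dotProduct, sq] using this

lemma vg_pow_zero (G : SimpleGraph V) (hG : G.Connected) (d : ℕ) (m : ℕ) (x v : V)
    (h : m < G.dist x v) : (simpleStep G d ^ m) x v = 0 := by
  induction m generalizing x with
  | zero =>
    rw [pow_zero, Matrix.one_apply_ne]
    rintro rfl
    simp at h
  | succ m ih =>
    rw [pow_succ', Matrix.mul_apply]
    refine Finset.sum_eq_zero fun w _ => ?_
    by_cases hw : G.Adj x w
    · rw [ih w, mul_zero]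
      have := hG.dist_triangle (u := x) (v := w) (w := v)
      rw [SimpleGraph.dist_eq_one_iff_adj.mpr hw] at this
      omega
    · simp [simpleStep, hw]

lemma vg_heat (G : SimpleGraph V) (hG : G.Connected) (d : ℕ) (hd : 0 < d) (ε ρ : ℝ) (hρ : 0 < ρ)
    (hdeg : ∀ v, ((univ : Finset V).filter fun w => G.Adj v w).card = d)
    (hP3 : PropP3 G d ε ρ) (h10 : (10 : ℝ) ≤ (d : ℝ) ^ ε) (m : ℕ) (hm : m ≤ 10) (x v : V) :
    (simpleStep G d ^ m) x v ≤ (10 * ρ + 1) ^ m * ((√(d : ℝ))⁻¹) ^ (m + G.dist x v) := by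
  have hB := vg_simple_stoch G d hd hdeg
  set q : ℝ := (√(d : ℝ))⁻¹ with hq
  have hd1 : (1 : ℝ) ≤ d := by exact_mod_cast hd
  have hq0 : 0 < q := by positivity
  have hq1 : q ≤ 1 := by
    rw [hq]; exact inv_le_one_of_one_le₀ (Real.one_le_sqrt.mpr hd1)
  have hq2 : q ^ 2 = (d : ℝ)⁻¹ := by rw [hq, inv_pow, Real.sq_sqrt (by positivity)]
  induction m generalizing x with
  | zero =>
    by_cases hxv : x = v
    · subst hxv; simp
    · rw [pow_zero, Matrix.one_apply_ne hxv]; positivity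
  | succ m ih =>
    have ih := fun x => ih (by omega) x
    set X := (10 * ρ + 1) ^ m * q ^ (m + 1 + G.dist x v) with hX
    have hX0 : 0 ≤ X := by positivity
    by_cases hfar : m + 1 < G.dist x v
    · rw [vg_pow_zero G hG d _ _ _ hfar]; positivity
    push Not at hfar
    have hcount : (((univ : Finset V).filter fun w => G.Adj x w ∧ G.dist w v ≤ G.dist v x).card : ℝ)
        ≤ 10 * ρ := by
      have hle : (G.dist v x : ℝ) ≤ 10 := by
        rw [SimpleGraph.dist_comm]; exact_mod_cast hfar.trans hm
      have := hP3 v x (hle.trans h10)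
      nlinarith
    rw [pow_succ', Matrix.mul_apply]
    calc ∑ w, simpleStep G d x w * (simpleStep G d ^ m) w v
        ≤ ∑ w, ((if G.Adj x w ∧ G.dist w v ≤ G.dist v x then X else 0) + simpleStep G d x w * X) := by
          refine Finset.sum_le_sum fun w _ => ?_
          by_cases hw : G.Adj x w
          · have hval : simpleStep G d x w = q ^ 2 := by simp [simpleStep, hw, hq2]
            have tri := hG.dist_triangle (u := x) (v := w) (w := v)
            rw [SimpleGraph.dist_eq_one_iff_adj.mpr hw] at tri
            by_cases hc : G.dist w v ≤ G.dist v x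
            · rw [if_pos ⟨hw, hc⟩]
              have h1 : simpleStep G d x w * (simpleStep G d ^ m) w v ≤ X := by
                calc _ ≤ q ^ 2 * ((10 * ρ + 1) ^ m * q ^ (m + G.dist w v)) := by
                      rw [hval]; gcongr; exact ih w
                  _ = (10 * ρ + 1) ^ m * q ^ (2 + (m + G.dist w v)) := by ring
                  _ ≤ X := by
                      rw [hX]
                      gcongr ?_ * ?_
                      exact pow_le_pow_of_le_one hq0.le hq1 (by omega)
              have h2 : 0 ≤ simpleStep G d x w * X := mul_nonneg (hB.nonneg _ _) hX0
              linarith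
            · rw [if_neg (by tauto), zero_add]
              refine mul_le_mul_of_nonneg_left ((ih w).trans ?_) (hB.nonneg _ _)
              rw [hX]
              gcongr ?_ * ?_
              rw [SimpleGraph.dist_comm (u := v)] at hc
              exact pow_le_pow_of_le_one hq0.le hq1 (by omega)
          · have hval : simpleStep G d x w = 0 := by simp [simpleStep, hw]
            simp [hval, hw]
      _ ≤ 10 * ρ * X + X := by
          rw [Finset.sum_add_distrib, ← Finset.sum_mul, hB.row, one_mul, ← Finset.sum_filter,
            Finset.sum_const, nsmul_eq_mul]
          gcongr
      _ = _ := by rw [hX]; ring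

lemma vg_walk_succ (M : Matrix V V ℝ) (u : V) (t : ℕ) (E : (Fin (t + 1 + 1) → V) → Prop) :
    walkProb M u (t + 1) E = ∑ v, M u v * walkProb M v t (fun p => E (Fin.cons u p)) := by
  unfold walkProb
  rw [← (Fin.consEquiv (fun _ : Fin (t + 1 + 1) => V)).sum_comp, Fintype.sum_prod_type]
  rw [Finset.sum_eq_single u]
  · simp only [Finset.mul_sum]
    rw [Finset.sum_comm]
    refine Finset.sum_congr rfl fun p _ => ?_
    rw [Finset.sum_eq_single (p 0)]
    · simp only [Fin.consEquiv_apply, Fin.cons_zero, true_and]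
      rw [Fin.prod_univ_succ]
      have hE : (Fin.consEquiv fun _ : Fin (t + 1 + 1) => V) (u, p) =
        (Fin.cons u p : Fin (t + 1 + 1) → V) := rfl
      rw [hE]
      by_cases h : E (Fin.cons u p)
      · simp [h]
      · simp [h]
    · intro b _ hb
      rw [if_neg (by rintro ⟨h, _⟩; exact hb h.symm), mul_zero]
    · simp
  · intro b _ hb
    refine Finset.sum_eq_zero fun p _ => ?_
    rw [if_neg]
    rintro ⟨h, _⟩
    simp [Fin.consEquiv_apply] at h
    exact hb h
  · simp

lemma vg_walk_zero (M : Matrix V V ℝ) (u : V) (E : (Fin (0 + 1) → V) → Prop) :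
    walkProb M u 0 E = if E (fun _ => u) then 1 else 0 := by
  unfold walkProb
  rw [Finset.sum_eq_single (fun _ => u)]
  · simp
  · intro p _ hp
    rw [if_neg]
    rintro ⟨h, _⟩
    apply hp
    funext i
    have : i = 0 := Fin.eq_zero i
    rw [this, h]
  · simp

lemma vg_walk_avoid (M : Matrix V V ℝ) (S : Finset V) (t : ℕ) (u : V) :
    walkProb M u t (fun p => ∀ s, p s ∉ S) = vgAvoid M S t u := by
  induction t generalizing u with
  | zero =>
    rw [vg_walk_zero]
    simp only [vgAvoid, vgInd]
    by_cases h : u ∈ S <;> simp [h]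
  | succ t ih =>
    rw [vg_walk_succ]
    simp only [vgAvoid, Fin.forall_fin_succ (n := t + 1), Fin.cons_zero, Fin.cons_succ]
    by_cases h : u ∈ S
    · simp [h, vgInd, walkProb]
    · simp only [h, not_false_eq_true, true_and, vgInd, if_false, one_mul]
      exact Finset.sum_congr rfl fun v _ => by rw [ih]

lemma vg_walk_avoid_shift (M : Matrix V V ℝ) (S : Finset V) (t T : ℕ) (u : V) :
    walkProb M u (t + T) (fun p => ∀ s : Fin (t + T + 1), T ≤ (s : ℕ) → p s ∉ S) =
      ∑ v, (M ^ T) u v * vgAvoid M S t v := by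
  induction T generalizing u with
  | zero =>
    simp only [Nat.zero_le, true_imp_iff, pow_zero, Nat.add_zero, vg_walk_avoid, Matrix.one_apply]
    simp
  | succ T ih =>
    rw [← Nat.add_assoc, vg_walk_succ]
    simp only [Fin.forall_fin_succ (n := t + T + 1), Fin.cons_zero, Fin.cons_succ, Fin.val_succ,
      Fin.val_zero, Nat.add_le_add_iff_right]
    simp only [Nat.le_zero, Nat.add_eq_zero_iff, one_ne_zero, and_false, false_imp_iff, true_and]
    simp only [ih, Finset.mul_sum, pow_succ', Matrix.mul_apply, Finset.sum_mul]
    rw [Finset.sum_comm]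
    exact Finset.sum_congr rfl fun v _ => Finset.sum_congr rfl fun w _ => by ring

lemma vg_walk_extend (M : Matrix V V ℝ) (h : VgStoch M) (u : V) (t : ℕ)
    (E : (Fin (t + 1) → V) → Prop) (E' : (Fin (t + 1 + 1) → V) → Prop)
    (hE : ∀ p, E' p → E (fun i => p i.castSucc)) :
    walkProb M u (t + 1) E' ≤ walkProb M u t E := by
  unfold walkProb
  rw [← (Fin.snocEquiv (fun _ : Fin (t + 1 + 1) => V)).sum_comp, Fintype.sum_prod_type,
    Finset.sum_comm]
  refine Finset.sum_le_sum fun p _ => ?_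
  have key : ∀ v : V, (if (Fin.snocEquiv (fun _ : Fin (t + 1 + 1) => V)) (v, p) 0 = u ∧
      E' ((Fin.snocEquiv (fun _ : Fin (t + 1 + 1) => V)) (v, p)) then
      ∏ i : Fin (t + 1), M ((Fin.snocEquiv (fun _ : Fin (t + 1 + 1) => V)) (v, p) i.castSucc)
        ((Fin.snocEquiv (fun _ : Fin (t + 1 + 1) => V)) (v, p) i.succ) else 0) ≤
      (if p 0 = u ∧ E p then ∏ i : Fin t, M (p i.castSucc) (p i.succ) else 0) *
        M (p (Fin.last t)) v := by
    intro v
    have h0 : (Fin.snocEquiv (fun _ : Fin (t + 1 + 1) => V)) (v, p) =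
      (Fin.snoc p v : Fin (t + 1 + 1) → V) := rfl
    rw [h0]
    have hp0 : (Fin.snoc p v : Fin (t + 1 + 1) → V) 0 = p 0 := by
      have := Fin.snoc_castSucc (α := fun _ : Fin (t + 1 + 1) => V) v p 0
      simpa only [Fin.castSucc_zero] using this
    have hprod : ∏ i : Fin (t + 1), M ((Fin.snoc p v : Fin (t + 1 + 1) → V) i.castSucc)
        ((Fin.snoc p v : Fin (t + 1 + 1) → V) i.succ) =
        (∏ i : Fin t, M (p i.castSucc) (p i.succ)) * M (p (Fin.last t)) v := by
      rw [Fin.prod_univ_castSucc]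
      congr 1
      · refine Finset.prod_congr rfl fun i _ => ?_
        rw [Fin.snoc_castSucc, Fin.succ_castSucc, Fin.snoc_castSucc]
      · rw [Fin.snoc_castSucc, Fin.succ_last, Fin.snoc_last]
    have hnn : 0 ≤ ∏ i : Fin t, M (p i.castSucc) (p i.succ) :=
      Finset.prod_nonneg fun i _ => h.nonneg _ _
    by_cases hc : (Fin.snoc p v : Fin (t + 1 + 1) → V) 0 = u ∧ E' (Fin.snoc p v)
    · rw [if_pos hc, hprod, if_pos]
      refine ⟨hp0 ▸ hc.1, ?_⟩
      have := hE _ hc.2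
      simpa only [Fin.snoc_castSucc] using this
    · rw [if_neg hc]
      split_ifs
      · exact mul_nonneg hnn (h.nonneg _ _)
      · simp
  refine (Finset.sum_le_sum fun v _ => key v).trans ?_
  rw [← Finset.mul_sum, h.row, mul_one]

lemma vg_core (G : SimpleGraph V) (S1 : Finset V) (δ : ℝ)
    (h : 2 * δ * (S1.card : ℝ) < (((S1 ×ˢ S1).filter fun p => G.Adj p.1 p.2).card : ℝ)) :
    ∃ S ⊆ S1, S.Nonempty ∧ ∀ v ∈ S, δ ≤ ((S.filter fun w => G.Adj v w).card : ℝ) := by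
  obtain ⟨S, hS, hmax⟩ := Finset.exists_max_image S1.powerset
    (fun S : Finset V => (((S ×ˢ S).filter fun p => G.Adj p.1 p.2).card : ℝ) - 2 * δ * (S.card : ℝ))
    ⟨S1, by simp⟩
  rw [Finset.mem_powerset] at hS
  refine ⟨S, hS, ?_, ?_⟩
  · by_contra hne
    rw [Finset.not_nonempty_iff_eq_empty] at hne
    have := hmax S1 (by simp)
    simp [hne] at this
    linarith
  · intro v hv
    have h1 := hmax (S.erase v) (by
      rw [Finset.mem_powerset]; exact (Finset.erase_subset _ _).trans hS)
    have h2 : ((S.erase v).card : ℝ) = (S.card : ℝ) - 1 := by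
      have := Finset.card_erase_add_one hv
      have : ((S.erase v).card : ℝ) + 1 = S.card := by exact_mod_cast this
      linarith
    have h3 : ((S ×ˢ S).filter fun p => G.Adj p.1 p.2).card ≤
        (((S.erase v) ×ˢ (S.erase v)).filter fun p => G.Adj p.1 p.2).card +
        ((S.filter fun w => G.Adj v w).card + (S.filter fun w => G.Adj v w).card) := by
      have hsub : ((S ×ˢ S).filter fun p => G.Adj p.1 p.2) ⊆
          (((S.erase v) ×ˢ (S.erase v)).filter fun p => G.Adj p.1 p.2) ∪
          ((S.filter fun w => G.Adj v w).image (fun w => (v, w)) ∪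
            (S.filter fun w => G.Adj v w).image (fun w => (w, v))) := by
        rintro ⟨a, b⟩ hab
        simp only [Finset.mem_filter, Finset.mem_product] at hab
        obtain ⟨⟨ha, hb⟩, hadj⟩ := hab
        simp only [Finset.mem_union, Finset.mem_filter, Finset.mem_product, Finset.mem_image,
          Finset.mem_erase, Prod.mk.injEq]
        by_cases hav : a = v
        · subst hav
          exact Or.inr (Or.inl ⟨b, ⟨hb, hadj⟩, rfl, rfl⟩)
        · by_cases hbv : b = v
          · subst hbv
            exact Or.inr (Or.inr ⟨a, ⟨ha, hadj.symm⟩, rfl, rfl⟩)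
          · exact Or.inl ⟨⟨⟨hav, ha⟩, ⟨hbv, hb⟩⟩, hadj⟩
      refine (Finset.card_le_card hsub).trans ((Finset.card_union_le _ _).trans ?_)
      gcongr
      refine (Finset.card_union_le _ _).trans ?_
      gcongr <;> exact Finset.card_image_le
    have h3' : ((((S ×ˢ S).filter fun p => G.Adj p.1 p.2).card : ℕ) : ℝ) ≤
        ((((S.erase v) ×ˢ (S.erase v)).filter fun p => G.Adj p.1 p.2).card : ℝ) +
        (((S.filter fun w => G.Adj v w).card : ℝ) + ((S.filter fun w => G.Adj v w).card : ℝ)) := by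
      exact_mod_cast h3
    simp only [h2] at h1
    linarith

lemma vg_level (G : SimpleGraph V) (hG : G.Connected) (d : ℕ) (ε ρ : ℝ)
    (hP3 : PropP3 G d ε ρ) (S : Finset V) (x : V) (δ : ℝ)
    (hS : ∀ v ∈ S, δ ≤ (((univ : Finset V).filter fun w => G.Adj v w ∧ w ∈ S).card : ℝ))
    (i : ℕ) (hi : ((i + 1 : ℕ) : ℝ) ≤ (d : ℝ) ^ ε) :
    ((S.filter fun y => G.dist x y = i).card : ℝ) * (δ - ρ * i) ≤
      ((S.filter fun y => G.dist x y = i + 1).card : ℝ) * (ρ * (i + 1 : ℕ)) := by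
  set A := S.filter fun y => G.dist x y = i with hA
  set B := S.filter fun y => G.dist x y = i + 1 with hB
  have hdc := Finset.sum_card_bipartiteAbove_eq_sum_card_bipartiteBelow (s := A) (t := B)
    (fun a b => G.Adj a b)
  have hdc' : ∑ a ∈ A, ((B.bipartiteAbove (fun a b => G.Adj a b) a).card : ℝ) =
    ∑ b ∈ B, ((A.bipartiteBelow (fun a b => G.Adj a b) b).card : ℝ) := by exact_mod_cast hdc
  have h1 : (A.card : ℝ) * (δ - ρ * i) ≤
      ∑ a ∈ A, ((B.bipartiteAbove (fun a b => G.Adj a b) a).card : ℝ) := by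
    rw [← nsmul_eq_mul]
    refine Finset.card_nsmul_le_sum _ _ _ fun a ha => ?_
    obtain ⟨haS, had⟩ := Finset.mem_filter.mp ha
    have p := hP3 x a (by rw [had]; refine le_trans ?_ hi; push_cast; linarith)
    rw [had] at p
    have hsub : ((univ : Finset V).filter fun w => G.Adj a w ∧ w ∈ S) ⊆
        ((univ : Finset V).filter fun w => G.Adj a w ∧ G.dist w x ≤ i) ∪
        (B.bipartiteAbove (fun a b => G.Adj a b) a) := by
      intro w hw
      simp only [Finset.mem_filter, Finset.mem_univ, true_and] at hw
      simp only [Finset.mem_union, Finset.mem_filter, Finset.mem_univ, true_and,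
        Finset.mem_bipartiteAbove, hB]
      by_cases hwd : G.dist w x ≤ i
      · exact Or.inl ⟨hw.1, hwd⟩
      · refine Or.inr ⟨⟨hw.2, ?_⟩, hw.1⟩
        have t1 := hG.dist_triangle (u := x) (v := a) (w := w)
        have t2 : G.dist a w = 1 := SimpleGraph.dist_eq_one_iff_adj.mpr hw.1
        rw [SimpleGraph.dist_comm] at hwd
        omega
    have hc := (Finset.card_le_card hsub).trans (Finset.card_union_le _ _)
    have hc' : (((univ : Finset V).filter fun w => G.Adj a w ∧ w ∈ S).card : ℝ) ≤
      (((univ : Finset V).filter fun w => G.Adj a w ∧ G.dist w x ≤ i).card : ℝ) +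
      ((B.bipartiteAbove (fun a b => G.Adj a b) a).card : ℝ) := by exact_mod_cast hc
    have := hS a haS
    linarith
  have h2 : ∑ b ∈ B, ((A.bipartiteBelow (fun a b => G.Adj a b) b).card : ℝ) ≤
      (B.card : ℝ) * (ρ * (i + 1 : ℕ)) := by
    rw [← nsmul_eq_mul]
    refine Finset.sum_le_card_nsmul _ _ _ fun b hb => ?_
    obtain ⟨hbS, hbd⟩ := Finset.mem_filter.mp hb
    have p := hP3 x b (by rw [hbd]; exact hi)
    rw [hbd] at p
    refine le_trans ?_ p
    have hsub : (A.bipartiteBelow (fun a b => G.Adj a b) b) ⊆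
      ((univ : Finset V).filter fun w => G.Adj b w ∧ G.dist w x ≤ i + 1) := by
      intro w hw
      simp only [Finset.mem_bipartiteBelow, hA, Finset.mem_filter] at hw
      simp only [Finset.mem_filter, Finset.mem_univ, true_and]
      refine ⟨hw.2.symm, ?_⟩
      rw [SimpleGraph.dist_comm, hw.1.2]; omega
    exact_mod_cast Finset.card_le_card hsub
  linarith

lemma vg_grow (G : SimpleGraph V) (hG : G.Connected) (d : ℕ) (ε ρ : ℝ) (hρ : 0 < ρ)
    (hP3 : PropP3 G d ε ρ) (S : Finset V) (x : V) (hx : x ∈ S) (r : ℕ)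
    (hr : (r : ℝ) ≤ (d : ℝ) ^ ε)
    (hS : ∀ v ∈ S, 4 * ρ * r ≤ (((univ : Finset V).filter fun w => G.Adj v w ∧ w ∈ S).card : ℝ)) :
    (3 : ℝ) ^ r ≤ (S.card : ℝ) := by
  have key : ∀ i ≤ r, (3 : ℝ) ^ i ≤ ((S.filter fun y => G.dist x y = i).card : ℝ) := by
    intro i
    induction i with
    | zero =>
      intro _
      have : 0 < (S.filter fun y => G.dist x y = 0).card := by
        rw [Finset.card_pos]; exact ⟨x, by simp [hx]⟩
      have : (1 : ℝ) ≤ ((S.filter fun y => G.dist x y = 0).card : ℝ) := by exact_mod_cast this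
      simpa using this
    | succ i ih =>
      intro hi
      have h1 := ih (by omega)
      have hir : ((i + 1 : ℕ) : ℝ) ≤ r := by exact_mod_cast hi
      have h2 := vg_level G hG d ε ρ hP3 S x (4 * ρ * r) hS i (hir.trans hr)
      set a := ((S.filter fun y => G.dist x y = i).card : ℝ)
      set b := ((S.filter fun y => G.dist x y = i + 1).card : ℝ)
      have ha : 0 ≤ a := by positivity
      have hi0 : (0 : ℝ) < ((i + 1 : ℕ) : ℝ) := by positivity
      have h3 : a * (3 * (ρ * ((i + 1 : ℕ) : ℝ))) ≤ b * (ρ * ((i + 1 : ℕ) : ℝ)) := by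
        refine le_trans (mul_le_mul_of_nonneg_left ?_ ha) h2
        have : ρ * ((i + 1 : ℕ) : ℝ) ≤ ρ * r := mul_le_mul_of_nonneg_left hir hρ.le
        push_cast at *
        nlinarith
      have h4 : a * 3 ≤ b := by
        rw [← mul_assoc] at h3
        exact le_of_mul_le_mul_right h3 (by positivity)
      rw [pow_succ]
      linarith
  refine (key r le_rfl).trans ?_
  exact_mod_cast Finset.card_filter_le _ _

lemma vg_component (G : SimpleGraph V) (hG : G.Connected) (d : ℕ) (ε ρ : ℝ) (hρ : 0 < ρ)
    (hP3 : PropP3 G d ε ρ) (S1 : Finset V) (r : ℕ)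
    (hr : (r : ℝ) ≤ (d : ℝ) ^ ε)
    (h : 2 * (4 * ρ * r) * (S1.card : ℝ) <
      (((S1 ×ˢ S1).filter fun p => G.Adj p.1 p.2).card : ℝ)) :
    ∃ S ⊆ S1, (G.induce (S : Set V)).Connected ∧ (3 : ℝ) ^ r ≤ (S.card : ℝ) := by
  obtain ⟨S, hS, ⟨x, hx⟩, hdeg⟩ := vg_core G S1 _ h
  let H : SimpleGraph V :=
    { Adj := fun a b => G.Adj a b ∧ a ∈ S ∧ b ∈ S
      symm := ⟨fun a b h => ⟨h.1.symm, h.2.2, h.2.1⟩⟩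
      loopless := ⟨fun a h => G.loopless.irrefl a h.1⟩ }
  let C := H.connectedComponentMk x
  let S' : Finset V := univ.filter fun y => y ∈ C.supp
  have hS'c : (S' : Set V) = C.supp := by ext y; simp [S']
  have hmem : ∀ y, y ∈ S' ↔ H.Reachable y x := by
    intro y
    simp [S', C]
  have hS'S : S' ⊆ S := by
    intro y hy
    obtain ⟨w⟩ := (hmem y).mp hy
    cases w with
    | nil => exact hx
    | cons hadj _ => exact hadj.2.1
  refine ⟨S', hS'S.trans hS, ?_, ?_⟩
  · rw [hS'c]
    have h1 : (H.induce C.supp).Connected := C.connected_toSimpleGraph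
    refine h1.mono ?_
    intro a b hab
    exact hab.1
  · refine vg_grow G hG d ε ρ hρ hP3 S' x ((hmem x).mpr (SimpleGraph.Reachable.refl _)) r hr ?_
    intro v hv
    refine (hdeg v (hS'S hv)).trans ?_
    have hsub : (S.filter fun w => G.Adj v w) ⊆
      ((univ : Finset V).filter fun w => G.Adj v w ∧ w ∈ S') := by
      intro w hw
      obtain ⟨hwS, hadj⟩ := Finset.mem_filter.mp hw
      simp only [Finset.mem_filter, Finset.mem_univ, true_and]
      refine ⟨hadj, (hmem w).mpr ?_⟩
      have h1 : H.Adj w v := ⟨hadj.symm, hwS, hS'S hv⟩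
      exact h1.reachable.trans ((hmem v).mp hv)
    exact_mod_cast Finset.card_le_card hsub

lemma vg_prob_lower {Ω : Type*} [Fintype Ω] (W X Y : Ω → ℝ) (E : Ω → Prop)
    (hW : ∀ ω, 0 ≤ W ω) (hsum : ∑ ω, W ω = 1) (a b y K : ℝ) (ha : 0 < a) (hy : 0 < y) (hK : 0 < K)
    (hX : a ≤ ∑ ω, W ω * X ω) (hX2 : ∑ ω, W ω * (X ω) ^ 2 ≤ b)
    (hY0 : ∀ ω, 0 ≤ Y ω) (hY : ∑ ω, W ω * Y ω ≤ y)
    (hE : ∀ ω, a / 2 ≤ X ω → Y ω ≤ K * y → E ω) :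
    1 - 4 * (b / a ^ 2 - 1) - 1 / K ≤ ∑ ω, (if E ω then W ω else 0) := by
  have hpt : ∀ ω, W ω - (if E ω then W ω else 0) ≤
      (4 / a ^ 2) * (W ω * (X ω) ^ 2 - 2 * a * (W ω * X ω) + a ^ 2 * W ω) +
        (1 / (K * y)) * (W ω * Y ω) := by
    intro ω
    have e1 : (4 / a ^ 2) * (W ω * (X ω) ^ 2 - 2 * a * (W ω * X ω) + a ^ 2 * W ω) =
      W ω * (4 * (X ω - a) ^ 2 / a ^ 2) := by ring
    have e2 : (1 / (K * y)) * (W ω * Y ω) = W ω * (Y ω / (K * y)) := by ring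
    rw [e1, e2]
    have n1 : 0 ≤ 4 * (X ω - a) ^ 2 / a ^ 2 := by positivity
    have n2 : 0 ≤ Y ω / (K * y) := div_nonneg (hY0 ω) (by positivity)
    have hw := hW ω
    by_cases h : E ω
    · simp only [h, if_true, sub_self]
      positivity
    · simp only [h, if_false, sub_zero]
      rw [← mul_add]
      refine le_mul_of_one_le_right hw ?_
      by_cases h1 : a / 2 ≤ X ω
      · have h2 : ¬ (Y ω ≤ K * y) := fun h2 => h (hE ω h1 h2)
        have : 1 ≤ Y ω / (K * y) := by
          rw [one_le_div (by positivity)]; linarith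
        linarith
      · have : 1 ≤ 4 * (X ω - a) ^ 2 / a ^ 2 := by
          rw [one_le_div (by positivity)]
          nlinarith
        linarith
  have hs := Finset.sum_le_sum (s := univ) fun ω _ => hpt ω
  rw [Finset.sum_sub_distrib, Finset.sum_add_distrib, ← Finset.mul_sum, ← Finset.mul_sum,
    Finset.sum_add_distrib, Finset.sum_sub_distrib, ← Finset.mul_sum, ← Finset.mul_sum, hsum] at hs
  have b1 : (4 / a ^ 2) * (∑ ω, W ω * (X ω) ^ 2 - 2 * a * ∑ ω, W ω * X ω + a ^ 2 * 1) ≤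
      4 * (b / a ^ 2 - 1) := by
    have : 4 * (b / a ^ 2 - 1) = (4 / a ^ 2) * (b - a ^ 2) := by field_simp
    rw [this]
    refine mul_le_mul_of_nonneg_left ?_ (by positivity)
    nlinarith
  have b2 : (1 / (K * y)) * ∑ ω, W ω * Y ω ≤ 1 / K := by
    have : 1 / K = (1 / (K * y)) * y := by field_simp
    rw [this]
    exact mul_le_mul_of_nonneg_left hY (by positivity)
  linarith

/-- Weight of a trajectory. -/
def vgW (M : Matrix V V ℝ) (u : V) (t : ℕ) (p : Fin (t + 1) → V) : ℝ :=
  if p 0 = u then ∏ i : Fin t, M (p i.castSucc) (p i.succ) else 0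

lemma vg_walk_eq (M : Matrix V V ℝ) (u : V) (t : ℕ) (E : (Fin (t + 1) → V) → Prop) :
    walkProb M u t E = ∑ p, if E p then vgW M u t p else 0 := by
  unfold walkProb vgW
  refine Finset.sum_congr rfl fun p _ => ?_
  by_cases h1 : p 0 = u <;> by_cases h2 : E p <;> simp [h1, h2]

lemma vgW_nonneg (M : Matrix V V ℝ) (h : VgStoch M) (u : V) (t : ℕ) (p : Fin (t + 1) → V) :
    0 ≤ vgW M u t p := by
  unfold vgW
  split_ifs
  · exact Finset.prod_nonneg fun i _ => h.nonneg _ _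
  · exact le_rfl

lemma vg_walk_true (M : Matrix V V ℝ) (h : VgStoch M) (u : V) (t : ℕ) :
    walkProb M u t (fun _ => True) = 1 := by
  induction t generalizing u with
  | zero => rw [vg_walk_zero]; simp
  | succ t ih =>
    rw [vg_walk_succ]
    simp only [ih, mul_one]
    exact h.row u

lemma vgW_sum (M : Matrix V V ℝ) (h : VgStoch M) (u : V) (t : ℕ) :
    ∑ p, vgW M u t p = 1 := by
  have := vg_walk_true M h u t
  rw [vg_walk_eq] at this
  simpa using this

lemma vg_walk_mono (M : Matrix V V ℝ) (h : VgStoch M) (u : V) (t : ℕ)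
    (E F : (Fin (t + 1) → V) → Prop) (hEF : ∀ p, E p → F p) :
    walkProb M u t E ≤ walkProb M u t F := by
  rw [vg_walk_eq, vg_walk_eq]
  refine Finset.sum_le_sum fun p _ => ?_
  by_cases h1 : E p
  · simp [h1, hEF p h1]
  · by_cases h2 : F p <;> simp [h1, h2, vgW_nonneg M h u t p]

lemma vg_walk_le_one (M : Matrix V V ℝ) (h : VgStoch M) (u : V) (t : ℕ)
    (E : (Fin (t + 1) → V) → Prop) : walkProb M u t E ≤ 1 := by
  rw [← vg_walk_true M h u t]
  exact vg_walk_mono M h u t _ _ fun _ _ => trivial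

lemma vg_walk_vacant_extend (G : SimpleGraph V) (M : Matrix V V ℝ) (h : VgStoch M) (u : V)
    (t T : ℕ) (K : ℝ) :
    walkProb M u (t + T) (fun p => bigVacantComponent G p 1 K) ≤
      walkProb M u t (fun p => bigVacantComponent G p 1 K) := by
  induction T with
  | zero => exact le_rfl
  | succ T ih =>
    refine le_trans ?_ ih
    refine vg_walk_extend M h u (t + T) _ _ ?_
    rintro p ⟨S, h1, h2, h3⟩
    refine ⟨S, fun v hv s hs => h1 v hv s.castSucc (by simpa using hs), h2, h3⟩

/-- Vertices not visited from time `T` on. -/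
def vgV0 {L : ℕ} (T : ℕ) (p : Fin (L + 1) → V) : Finset V :=
  univ.filter fun v => ∀ s : Fin (L + 1), T ≤ (s : ℕ) → p s ≠ v

/-- Probability that `S` is not visited from time `T` on. -/
def vgP (M : Matrix V V ℝ) (u : V) (L T : ℕ) (S : Finset V) : ℝ :=
  walkProb M u L (fun p => ∀ s : Fin (L + 1), T ≤ (s : ℕ) → p s ∉ S)

lemma vgP_eq (M : Matrix V V ℝ) (u : V) (L T : ℕ) (S : Finset V) :
    vgP M u L T S = ∑ p, vgW M u L p * (if S ⊆ vgV0 T p then 1 else 0) := by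
  unfold vgP
  rw [vg_walk_eq]
  refine Finset.sum_congr rfl fun p _ => ?_
  have : (∀ s : Fin (L + 1), T ≤ (s : ℕ) → p s ∉ S) ↔ S ⊆ vgV0 T p := by
    constructor
    · intro h v hv
      simp only [vgV0, Finset.mem_filter, Finset.mem_univ, true_and]
      intro s hs hps
      exact h s hs (hps ▸ hv)
    · intro h s hs hmem
      have := h hmem
      simp only [vgV0, Finset.mem_filter, Finset.mem_univ, true_and] at this
      exact this s hs rfl
  simp only [this]
  split_ifs <;> simp

lemma vgP_anti (M : Matrix V V ℝ) (h : VgStoch M) (u : V) (L T : ℕ) (S S' : Finset V)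
    (hS : S ⊆ S') : vgP M u L T S' ≤ vgP M u L T S :=
  vg_walk_mono M h u L _ _ fun _ hp s hs hm => hp s hs (hS hm)

/-- Ordered edges. -/
def vgEd (G : SimpleGraph V) : Finset (V × V) := univ.filter fun e => G.Adj e.1 e.2

/-- Number of ordered edges inside the vacant set. -/
def vgX (G : SimpleGraph V) {L : ℕ} (T : ℕ) (p : Fin (L + 1) → V) : ℝ :=
  ∑ e ∈ vgEd G, if ({e.1, e.2} : Finset V) ⊆ vgV0 T p then 1 else 0

lemma vgX_eq (G : SimpleGraph V) {L : ℕ} (T : ℕ) (p : Fin (L + 1) → V) :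
    vgX G T p = ((((vgV0 T p) ×ˢ (vgV0 T p)).filter fun e => G.Adj e.1 e.2).card : ℝ) := by
  unfold vgX vgEd
  rw [Finset.sum_boole]
  congr 2
  ext ⟨a, b⟩
  simp [Finset.insert_subset_iff, and_comm]

lemma vgX_mean (G : SimpleGraph V) (M : Matrix V V ℝ) (u : V) (L T : ℕ) :
    ∑ p, vgW M u L p * vgX G T p = ∑ e ∈ vgEd G, vgP M u L T {e.1, e.2} := by
  simp only [vgP_eq, vgX, Finset.mul_sum]
  rw [Finset.sum_comm]

lemma vgX_second (G : SimpleGraph V) (M : Matrix V V ℝ) (u : V) (L T : ℕ) :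
    ∑ p, vgW M u L p * (vgX G T p) ^ 2 =
      ∑ e ∈ vgEd G, ∑ f ∈ vgEd G, vgP M u L T ({e.1, e.2} ∪ {f.1, f.2}) := by
  simp only [vgP_eq, vgX, sq, Finset.sum_mul_sum]
  simp only [Finset.mul_sum]
  rw [Finset.sum_comm]
  refine Finset.sum_congr rfl fun e _ => ?_
  rw [Finset.sum_comm]
  refine Finset.sum_congr rfl fun f _ => Finset.sum_congr rfl fun p _ => ?_
  congr 1
  by_cases h1 : ({e.1, e.2} : Finset V) ⊆ vgV0 T p <;>
    by_cases h2 : ({f.1, f.2} : Finset V) ⊆ vgV0 T p <;>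
      simp only [Finset.union_subset_iff, h1, h2, if_true, if_false, mul_zero, mul_one, and_true,
        and_false]

lemma vgY_mean (M : Matrix V V ℝ) (u : V) (L T : ℕ) :
    ∑ p, vgW M u L p * ((vgV0 T p).card : ℝ) = ∑ v, vgP M u L T {v} := by
  simp only [vgP_eq, Finset.singleton_subset_iff]
  rw [Finset.sum_comm]
  refine Finset.sum_congr rfl fun p _ => ?_
  rw [← Finset.mul_sum, Finset.sum_boole]
  congr 3
  ext v; simp

lemma vgEd_card (G : SimpleGraph V) (d : ℕ)
    (hdeg : ∀ v, ((univ : Finset V).filter fun w => G.Adj v w).card = d) :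
    (vgEd G).card = Fintype.card V * d := by
  have h1 : (vgEd G).card = ∑ v : V, ((univ : Finset V).filter fun w => G.Adj v w).card := by
    simp only [vgEd, Finset.card_filter]
    rw [Fintype.sum_prod_type]
  rw [h1]
  simp [hdeg]

lemma vgEd_touch (G : SimpleGraph V) (d : ℕ)
    (hdeg : ∀ v, ((univ : Finset V).filter fun w => G.Adj v w).card = d) (A : Finset V) :
    ((vgEd G).filter fun f => f.1 ∈ A ∨ f.2 ∈ A).card ≤ 2 * A.card * d := by
  have hsub : ((vgEd G).filter fun f => f.1 ∈ A ∨ f.2 ∈ A) ⊆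
      (A.sigma fun a => (univ : Finset V).filter fun w => G.Adj a w).image (fun x => (x.1, x.2)) ∪
      (A.sigma fun a => (univ : Finset V).filter fun w => G.Adj a w).image
        (fun x => (x.2, x.1)) := by
    rintro ⟨a, b⟩ h
    simp only [vgEd, Finset.mem_filter, Finset.mem_univ, true_and] at h
    simp only [Finset.mem_union, Finset.mem_image, Finset.mem_sigma, Finset.mem_filter,
      Finset.mem_univ, true_and, Prod.mk.injEq]
    rcases h with ⟨hadj, h | h⟩
    · exact Or.inl ⟨⟨a, b⟩, ⟨h, hadj⟩, rfl, rfl⟩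
    · exact Or.inr ⟨⟨b, a⟩, ⟨h, hadj.symm⟩, rfl, rfl⟩
  have hc : (A.sigma fun a => (univ : Finset V).filter fun w => G.Adj a w).card = A.card * d := by
    simp [Finset.card_sigma, hdeg]
  refine (Finset.card_le_card hsub).trans ((Finset.card_union_le _ _).trans ?_)
  have i1 := Finset.card_image_le (s := A.sigma fun a => (univ : Finset V).filter fun w => G.Adj a w)
    (f := fun x => ((x.1, x.2) : V × V))
  have i2 := Finset.card_image_le (s := A.sigma fun a => (univ : Finset V).filter fun w => G.Adj a w)
    (f := fun x => ((x.2, x.1) : V × V))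
  rw [hc] at i1 i2
  calc _ ≤ A.card * d + A.card * d := add_le_add i1 i2
    _ = _ := by ring

lemma vgX_second_le (G : SimpleGraph V) (d : ℕ)
    (hdeg : ∀ v, ((univ : Finset V).filter fun w => G.Adj v w).card = d)
    (M : Matrix V V ℝ) (h : VgStoch M) (u : V) (L T : ℕ) (U2 U4 : ℝ) (hU2 : 0 ≤ U2) (hU4 : 0 ≤ U4)
    (h2 : ∀ S : Finset V, S.card = 2 → vgP M u L T S ≤ U2)
    (h4 : ∀ S : Finset V, S.card = 4 → vgP M u L T S ≤ U4) :
    ∑ e ∈ vgEd G, ∑ f ∈ vgEd G, vgP M u L T ({e.1, e.2} ∪ {f.1, f.2}) ≤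
      ((Fintype.card V : ℝ) * d) * ((Fintype.card V : ℝ) * d * U4 + 4 * d * U2) := by
  have hcard := vgEd_card G d hdeg
  have hone : ∀ e ∈ vgEd G, ∑ f ∈ vgEd G, vgP M u L T ({e.1, e.2} ∪ {f.1, f.2}) ≤
      (Fintype.card V : ℝ) * d * U4 + 4 * d * U2 := by
    intro e he
    have hadj : G.Adj e.1 e.2 := by simpa [vgEd] using he
    have hpt : ∀ f ∈ vgEd G, vgP M u L T ({e.1, e.2} ∪ {f.1, f.2}) ≤
        U4 + (if f.1 ∈ ({e.1, e.2} : Finset V) ∨ f.2 ∈ ({e.1, e.2} : Finset V) then U2 else 0) := by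
      intro f hf
      have hadjf : G.Adj f.1 f.2 := by simpa [vgEd] using hf
      split_ifs with hc
      · have := (vgP_anti M h u L T {e.1, e.2} ({e.1, e.2} ∪ {f.1, f.2})
          Finset.subset_union_left).trans (h2 _ (Finset.card_pair hadj.ne))
        linarith
      · rw [add_zero]
        refine h4 _ ?_
        rw [Finset.card_union_of_disjoint, Finset.card_pair hadj.ne, Finset.card_pair hadjf.ne]
        rw [Finset.disjoint_right]
        intro x hx
        push Not at hc
        rcases Finset.mem_insert.mp hx with rfl | hx
        · exact hc.1
        · rw [Finset.mem_singleton] at hx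
          subst hx; exact hc.2
    refine (Finset.sum_le_sum hpt).trans ?_
    rw [Finset.sum_add_distrib, Finset.sum_const, hcard, ← Finset.sum_filter, Finset.sum_const]
    have ht := vgEd_touch G d hdeg {e.1, e.2}
    rw [Finset.card_pair hadj.ne] at ht
    have ht' : ((((vgEd G).filter fun f => f.1 ∈ ({e.1, e.2} : Finset V) ∨
      f.2 ∈ ({e.1, e.2} : Finset V)).card : ℕ) : ℝ) ≤ 4 * d := by
      have : ((((vgEd G).filter fun f => f.1 ∈ ({e.1, e.2} : Finset V) ∨
        f.2 ∈ ({e.1, e.2} : Finset V)).card : ℕ) : ℝ) ≤ ((2 * 2 * d : ℕ) : ℝ) := by exact_mod_cast ht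
      push_cast at this; linarith
    simp only [nsmul_eq_mul]
    push_cast
    have := mul_le_mul_of_nonneg_right ht' hU2
    linarith
  refine (Finset.sum_le_card_nsmul _ _ _ hone).trans ?_
  rw [hcard, nsmul_eq_mul]
  push_cast
  exact le_rfl

lemma vg_event (G : SimpleGraph V) (hG : G.Connected) (d : ℕ)
    (hdeg : ∀ v, ((univ : Finset V).filter fun w => G.Adj v w).card = d) (ε ρ : ℝ) (hρ : 0 < ρ)
    (hP3 : PropP3 G d ε ρ) (r : ℕ) (hr : (r : ℝ) ≤ (d : ℝ) ^ ε) (K : ℝ) (hK : K ≤ (3 : ℝ) ^ r)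
    {L : ℕ} (T : ℕ) (hT : T ≤ L) (p : Fin (L + 1) → V) (x0 y0 : ℝ) (hx0 : x0 ≤ vgX G T p)
    (hy0 : ((vgV0 T p).card : ℝ) ≤ y0) (hxy : 2 * (4 * ρ * r) * y0 + 2 * T * d < x0) :
    bigVacantComponent G p 1 K := by
  let A : Finset V := (Finset.range T).image fun s => p (Fin.ofNat (L + 1) s)
  have hA : A.card ≤ T := by
    refine Finset.card_image_le.trans ?_
    simp
  set S1 := vgV0 T p \ A with hS1
  have hS1c : (S1.card : ℝ) ≤ y0 := by
    refine le_trans ?_ hy0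
    exact_mod_cast Finset.card_le_card Finset.sdiff_subset
  have hE : ((((vgV0 T p) ×ˢ (vgV0 T p)).filter fun e => G.Adj e.1 e.2).card) ≤
      ((S1 ×ˢ S1).filter fun e => G.Adj e.1 e.2).card + 2 * T * d := by
    have hsub : (((vgV0 T p) ×ˢ (vgV0 T p)).filter fun e => G.Adj e.1 e.2) ⊆
        ((S1 ×ˢ S1).filter fun e => G.Adj e.1 e.2) ∪
          ((vgEd G).filter fun f => f.1 ∈ A ∨ f.2 ∈ A) := by
      rintro ⟨a, b⟩ hab
      simp only [Finset.mem_filter, Finset.mem_product] at hab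
      simp only [Finset.mem_union, Finset.mem_filter, Finset.mem_product, vgEd, Finset.mem_univ,
        true_and, hS1, Finset.mem_sdiff]
      by_cases h1 : a ∈ A
      · exact Or.inr ⟨hab.2, Or.inl h1⟩
      · by_cases h2 : b ∈ A
        · exact Or.inr ⟨hab.2, Or.inr h2⟩
        · exact Or.inl ⟨⟨⟨hab.1.1, h1⟩, ⟨hab.1.2, h2⟩⟩, hab.2⟩
    refine (Finset.card_le_card hsub).trans ((Finset.card_union_le _ _).trans ?_)
    gcongr
    refine (vgEd_touch G d hdeg A).trans ?_
    gcongr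
  rw [vgX_eq] at hx0
  have hE' : ((((vgV0 T p) ×ˢ (vgV0 T p)).filter fun e => G.Adj e.1 e.2).card : ℝ) ≤
      (((S1 ×ˢ S1).filter fun e => G.Adj e.1 e.2).card : ℝ) + 2 * T * d := by exact_mod_cast hE
  have hr0 : 0 ≤ 2 * (4 * ρ * (r : ℝ)) := by positivity
  obtain ⟨S, hS, hconn, hcard⟩ := vg_component G hG d ε ρ hρ hP3 S1 r hr (by
    have := mul_le_mul_of_nonneg_left hS1c hr0
    linarith)
  refine ⟨S, ?_, hconn, hK.trans hcard⟩
  intro v hv s _ hps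
  have hv1 := hS hv
  rw [hS1, Finset.mem_sdiff] at hv1
  by_cases hs : T ≤ (s : ℕ)
  · have := hv1.1
    simp only [vgV0, Finset.mem_filter, Finset.mem_univ, true_and] at this
    exact this s hs hps
  · apply hv1.2
    simp only [A, Finset.mem_image, Finset.mem_range]
    refine ⟨s, by omega, ?_⟩
    rw [← hps]
    congr 1
    ext
    simp [Fin.ofNat, Nat.mod_eq_of_lt s.isLt]

lemma vg_main (G : SimpleGraph V) (hG : G.Connected) (d : ℕ) (hd : 0 < d)
    (hdeg : ∀ v, ((univ : Finset V).filter fun w => G.Adj v w).card = d) (ε ρ : ℝ) (hρ : 0 < ρ)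
    (hP3 : PropP3 G d ε ρ) (r : ℕ) (hr : (r : ℝ) ≤ (d : ℝ) ^ ε) (K : ℝ) (hK : K ≤ (3 : ℝ) ^ r)
    (M : Matrix V V ℝ) (h : VgStoch M) (u : V) (t T : ℕ) (q U1 U2 U4 κ : ℝ) (hq : 0 < q)
    (hκ : 0 < κ) (hU1 : 0 < U1) (hU2 : 0 ≤ U2) (hU4 : 0 ≤ U4)
    (hlow : ∀ S : Finset V, S.card = 2 → q ≤ vgP M u (t + T) T S)
    (h1 : ∀ S : Finset V, S.card = 1 → vgP M u (t + T) T S ≤ U1)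
    (h2 : ∀ S : Finset V, S.card = 2 → vgP M u (t + T) T S ≤ U2)
    (h4 : ∀ S : Finset V, S.card = 4 → vgP M u (t + T) T S ≤ U4)
    (hxy : 2 * (4 * ρ * r) * (κ * ((Fintype.card V : ℝ) * U1)) + 2 * T * d <
      (Fintype.card V : ℝ) * d * q / 2) :
    1 - 4 * (U4 / q ^ 2 + 4 * U2 / ((Fintype.card V : ℝ) * q ^ 2) - 1) - 1 / κ ≤
      walkProb M u t (fun p => bigVacantComponent G p 1 K) := by
  refine le_trans ?_ (vg_walk_vacant_extend G M h u t T K)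
  rw [vg_walk_eq]
  have hN : (0 : ℝ) < Fintype.card V := by
    have : 0 < Fintype.card V := Fintype.card_pos_iff.mpr ⟨u⟩
    exact_mod_cast this
  have hd' : (0 : ℝ) < d := by exact_mod_cast hd
  have hmain := vg_prob_lower (vgW M u (t + T)) (fun p => vgX G T p)
    (fun p => ((vgV0 T p).card : ℝ)) (fun p => bigVacantComponent G p 1 K)
    (vgW_nonneg M h u (t + T)) (vgW_sum M h u (t + T))
    ((Fintype.card V : ℝ) * d * q)
    (((Fintype.card V : ℝ) * d) * ((Fintype.card V : ℝ) * d * U4 + 4 * d * U2))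
    ((Fintype.card V : ℝ) * U1) κ (by positivity) (by positivity) hκ
    (by
      rw [vgX_mean]
      have : (vgEd G).card • q ≤ ∑ e ∈ vgEd G, vgP M u (t + T) T {e.1, e.2} := by
        refine Finset.card_nsmul_le_sum _ _ _ fun e he => ?_
        have hadj : G.Adj e.1 e.2 := by simpa [vgEd] using he
        exact hlow _ (Finset.card_pair hadj.ne)
      rw [vgEd_card G d hdeg, nsmul_eq_mul] at this
      push_cast at this
      exact this)
    (by
      rw [vgX_second]
      exact vgX_second_le G d hdeg M h u (t + T) T U2 U4 hU2 hU4 h2 h4)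
    (fun p => by positivity)
    (by
      rw [vgY_mean]
      refine (Finset.sum_le_card_nsmul _ _ _ fun v _ => h1 {v} (Finset.card_singleton v)).trans ?_
      rw [nsmul_eq_mul, Finset.card_univ])
    (fun p hx hy => vg_event G hG d hdeg ε ρ hρ hP3 r hr K hK T (Nat.le_add_left _ _) p _ _ hx hy
      hxy)
  refine le_trans (le_of_eq ?_) hmain
  congr 3
  field_simp

lemma vg_exp_low (y : ℝ) (hy0 : 0 ≤ y) (hy : y < 1) : Real.exp (-(y / (1 - y))) ≤ 1 - y := by
  have h1 : 0 < 1 - y := by linarith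
  have h2 : 1 / (1 - y) ≤ Real.exp (y / (1 - y)) := by
    have := Real.add_one_le_exp (y / (1 - y))
    have e : y / (1 - y) + 1 = 1 / (1 - y) := by field_simp; ring
    linarith
  rw [Real.exp_neg]
  rw [inv_le_comm₀ (Real.exp_pos _) h1, ← one_div]
  exact h2

lemma vgP_mix (M : Matrix V V ℝ) (h : VgStoch M) (u : V) (t T : ℕ) (S : Finset V)
    (hmix : ∀ v, |(M ^ T) u v - (Fintype.card V : ℝ)⁻¹| ≤ ((Fintype.card V : ℝ) ^ 2)⁻¹) :
    ((Fintype.card V : ℝ)⁻¹ - ((Fintype.card V : ℝ) ^ 2)⁻¹) * ∑ v, vgAvoid M S t v ≤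
      vgP M u (t + T) T S ∧
    vgP M u (t + T) T S ≤
      ((Fintype.card V : ℝ)⁻¹ + ((Fintype.card V : ℝ) ^ 2)⁻¹) * ∑ v, vgAvoid M S t v := by
  unfold vgP
  rw [vg_walk_avoid_shift, Finset.mul_sum, Finset.mul_sum]
  constructor <;> refine Finset.sum_le_sum fun v _ => mul_le_mul_of_nonneg_right ?_
    (vgAvoid_nonneg M h S t v)
  · have := (abs_le.mp (hmix v)).1; linarith
  · have := (abs_le.mp (hmix v)).2; linarith

open Matrix in
lemma vg_lazy_upper (G : SimpleGraph V) (hG : G.Connected) (d : ℕ) (hd : 0 < d)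
    (hdeg : ∀ v, ((univ : Finset V).filter fun w => G.Adj v w).card = d) (ε ρ : ℝ) (hρ : 0 < ρ)
    (hP3 : PropP3 G d ε ρ) (h10 : (10 : ℝ) ≤ (d : ℝ) ^ ε) (g : ℝ) (hg0 : 0 < g)
    (hgap : SpectralGapLB G d g) (κ : ℝ) (k1 : 16 / (d : ℝ) ≤ κ)
    (k2 : 2 / (g * Fintype.card V) ≤ κ)
    (k3 : 2 * ((10 * ρ + 1) ^ 10 * ((d : ℝ) ^ 5)⁻¹) / g ≤ κ ^ 2)
    (S : Finset V) (hS : S.Nonempty) (hS4 : S.card ≤ 4) (hN : 8 ≤ Fintype.card V) (t : ℕ) :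
    ∑ u, vgAvoid (lazyStep G d) S t u ≤
      Real.exp (-(S.card * (1 - 4 * κ) * (t / (2 * Fintype.card V)))) * Fintype.card V := by
  have hB := vg_simple_stoch G d hd hdeg
  have hM := vg_lazy_stoch G d hB
  have hd' : (0 : ℝ) < d := by exact_mod_cast hd
  have hN8 : (8 : ℝ) ≤ Fintype.card V := by exact_mod_cast hN
  have hs4 : (S.card : ℝ) ≤ 4 := by exact_mod_cast hS4
  have hs0 : (0 : ℝ) ≤ S.card := by positivity
  have hκ : 0 ≤ κ := le_trans (by positivity) k1
  have hdir := vg_dirichlet (simpleStep G d) hB d g ((10 * ρ + 1) ^ 10 * ((d : ℝ) ^ 5)⁻¹) κ hd' hg0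
    (by positivity) hκ
    (by
      intro a b
      simp only [simpleStep, Matrix.of_apply]
      split_ifs
      · exact le_rfl
      · positivity)
    (by
      intro a b
      refine (vg_heat G hG d hd ε ρ hρ hdeg hP3 h10 10 le_rfl a b).trans ?_
      refine mul_le_mul_of_nonneg_left ?_ (by positivity)
      have hq1 : (√(d : ℝ))⁻¹ ≤ 1 :=
        inv_le_one_of_one_le₀ (Real.one_le_sqrt.mpr (by exact_mod_cast hd))
      refine (pow_le_pow_of_le_one (by positivity) hq1 (Nat.le_add_right 10 (G.dist a b))).trans ?_
      have : ((√(d : ℝ))⁻¹) ^ 10 = ((d : ℝ) ^ 5)⁻¹ := by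
        rw [inv_pow]
        congr 1
        rw [show (10 : ℕ) = 2 * 5 from rfl, pow_mul, Real.sq_sqrt hd'.le]
      rw [this])
    (by
      intro x hx
      have h1 := vg_gap_form G d g hgap x hx
      have h2 := vg_lazy_form G d x
      rw [h2] at h1
      linarith)
    S hS
    (by
      refine le_trans ?_ k1
      gcongr; linarith)
    (by
      refine le_trans ?_ k2
      rw [div_le_div_iff₀ (by positivity) (by positivity)]
      have : 0 < g * (Fintype.card V : ℝ) := by positivity
      nlinarith)
    (by
      refine le_trans ?_ k3
      have hA : 0 < (10 * ρ + 1) ^ 10 * ((d : ℝ) ^ 5)⁻¹ := by positivity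
      rw [div_le_div_iff₀ (by positivity) (by positivity)]
      have : 0 < (10 * ρ + 1) ^ 10 * ((d : ℝ) ^ 5)⁻¹ * g := by positivity
      nlinarith)
  set y := (S.card : ℝ) * (1 - 4 * κ) * (1 / (2 * Fintype.card V)) with hy
  have hy1 : y ≤ 1 := by
    rw [hy, mul_one_div, div_le_one (by positivity)]
    nlinarith
  have hup := vgAvoid_upper (lazyStep G d) hM (vg_lazy_psd G d hB) S (1 - y) (by linarith)
    (by
      intro f hf
      have h1 := hdir f hf
      rw [vg_lazy_form]
      have : (S.card : ℝ) / Fintype.card V * (1 - 4 * κ) * (f ⬝ᵥ f) = 2 * y * (f ⬝ᵥ f) := by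
        rw [hy]; field_simp
      rw [this] at h1
      linarith) t
  refine hup.trans ?_
  gcongr
  have h1 : 1 - y ≤ Real.exp (-y) := by
    have := Real.add_one_le_exp (-y); linarith
  refine (pow_le_pow_left₀ (by linarith) h1 t).trans (le_of_eq ?_)
  rw [← Real.exp_nat_mul]
  congr 1
  rw [hy]; field_simp

lemma vg_lazy_lower (G : SimpleGraph V) (d : ℕ) (hd : 0 < d)
    (hdeg : ∀ v, ((univ : Finset V).filter fun w => G.Adj v w).card = d)
    (S : Finset V) (hS : S.card = 2) (hN : 8 ≤ Fintype.card V) (t : ℕ) :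
    Real.exp (-(t / ((Fintype.card V : ℝ) - 3))) * ((Fintype.card V : ℝ) - 2) ≤
      ∑ u, vgAvoid (lazyStep G d) S t u := by
  have hB := vg_simple_stoch G d hd hdeg
  have hM := vg_lazy_stoch G d hB
  have hN8 : (8 : ℝ) ≤ Fintype.card V := by exact_mod_cast hN
  have hlow := vgAvoid_lower (lazyStep G d) hM (vg_lazy_psd G d hB) (vg_lazy_diag G d) S
    (by rw [hS]; push_cast; linarith) t
  refine le_trans ?_ hlow
  rw [hS]
  push_cast
  refine mul_le_mul_of_nonneg_right ?_ (by linarith)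
  set N := (Fintype.card V : ℝ)
  have e1 : (2 : ℝ) / (2 * (N - 2)) = 1 / (N - 2) := by
    have : N - 2 ≠ 0 := by linarith
    field_simp
  rw [e1]
  have hy : 1 / (N - 2) < 1 := by
    rw [div_lt_one (by linarith)]; linarith
  have h0 : (0 : ℝ) ≤ 1 / (N - 2) := by
    apply div_nonneg <;> linarith
  have := vg_exp_low _ h0 hy
  have e2 : 1 / (N - 2) / (1 - 1 / (N - 2)) = 1 / (N - 3) := by
    have h1 : N - 2 ≠ 0 := by linarith
    have h2 : N - 3 ≠ 0 := by linarith
    have h3 : 1 - 1 / (N - 2) = (N - 3) / (N - 2) := by field_simp; ring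
    rw [h3]; field_simp
  rw [e2] at this
  refine le_trans (le_of_eq ?_) (pow_le_pow_left₀ (Real.exp_pos _).le this t)
  rw [← Real.exp_nat_mul]
  congr 1
  ring

lemma vg_bounds (G : SimpleGraph V) (hG : G.Connected) (d : ℕ) (hd : 0 < d)
    (hdeg : ∀ v, ((univ : Finset V).filter fun w => G.Adj v w).card = d) (ε ρ : ℝ) (hρ : 0 < ρ)
    (hP3 : PropP3 G d ε ρ) (h10 : (10 : ℝ) ≤ (d : ℝ) ^ ε) (g : ℝ) (hg0 : 0 < g) (hg1 : g ≤ 1)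
    (hgap : SpectralGapLB G d g) (κ : ℝ) (k1 : 16 / (d : ℝ) ≤ κ)
    (k2 : 2 / (g * Fintype.card V) ≤ κ)
    (k3 : 2 * ((10 * ρ + 1) ^ 10 * ((d : ℝ) ^ 5)⁻¹) / g ≤ κ ^ 2)
    (hN : 8 ≤ Fintype.card V) (t T : ℕ) (hT : (1 - g) ^ T ≤ ((Fintype.card V : ℝ) ^ 4)⁻¹)
    (β θ : ℝ) (hβ : β = t / (2 * Fintype.card V))
    (hθ1 : 1 / (Fintype.card V : ℝ) + 16 * κ * β ≤ θ)
    (hθ2 : (3 + 6 * β) / ((Fintype.card V : ℝ) - 3) ≤ θ) (u : V) :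
    (∀ S : Finset V, S.Nonempty → S.card ≤ 4 →
      vgP (lazyStep G d) u (t + T) T S ≤ Real.exp θ * Real.exp (-β) ^ S.card) ∧
    (∀ S : Finset V, S.card = 2 →
      Real.exp (-θ) * Real.exp (-β) ^ 2 ≤ vgP (lazyStep G d) u (t + T) T S) := by
  have hB := vg_simple_stoch G d hd hdeg
  have hM := vg_lazy_stoch G d hB
  have hN8 : (8 : ℝ) ≤ Fintype.card V := by exact_mod_cast hN
  have hβ0 : 0 ≤ β := by rw [hβ]; positivity
  have hκ : 0 ≤ κ := le_trans (by positivity) k1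
  have hmix : ∀ v, |((lazyStep G d) ^ T) u v - (Fintype.card V : ℝ)⁻¹| ≤
      ((Fintype.card V : ℝ) ^ 2)⁻¹ := by
    intro v
    have := (vg_mixing (lazyStep G d) hM (vg_lazy_psd G d hB) g hg1 (vg_gap_form G d g hgap) T u
      v).trans hT
    refine abs_le_of_sq_le_sq ?_ (by positivity)
    refine this.trans (le_of_eq ?_)
    rw [inv_pow, ← pow_mul]
  constructor
  · intro S hS hS4
    refine (vgP_mix (lazyStep G d) hM u t T S hmix).2.trans ?_
    have h1 := vg_lazy_upper G hG d hd hdeg ε ρ hρ hP3 h10 g hg0 hgap κ k1 k2 k3 S hS hS4 hN t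
    rw [← hβ] at h1
    have hs4 : (S.card : ℝ) ≤ 4 := by exact_mod_cast hS4
    set N := (Fintype.card V : ℝ)
    set s := (S.card : ℝ)
    refine (mul_le_mul_of_nonneg_left h1 (by positivity)).trans ?_
    have e1 : (N⁻¹ + (N ^ 2)⁻¹) * (Real.exp (-(s * (1 - 4 * κ) * β)) * N) =
      (1 + 1 / N) * Real.exp (-(s * (1 - 4 * κ) * β)) := by field_simp
    rw [e1]
    have h2 : 1 + 1 / N ≤ Real.exp (1 / N) := by
      have := Real.add_one_le_exp (1 / N); linarith
    refine (mul_le_mul_of_nonneg_right h2 (Real.exp_pos _).le).trans ?_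
    rw [← Real.exp_nat_mul, ← Real.exp_add, ← Real.exp_add, Real.exp_le_exp]
    have : s * (κ * β) ≤ 4 * (κ * β) := mul_le_mul_of_nonneg_right hs4 (by positivity)
    nlinarith
  · intro S hS
    refine le_trans ?_ (vgP_mix (lazyStep G d) hM u t T S hmix).1
    have h1 := vg_lazy_lower G d hd hdeg S hS hN t
    set N := (Fintype.card V : ℝ)
    have hn : 0 ≤ N⁻¹ - (N ^ 2)⁻¹ := by
      have : N⁻¹ - (N ^ 2)⁻¹ = (N - 1) / N ^ 2 := by field_simp
      rw [this]
      apply div_nonneg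
      · linarith
      · positivity
    refine le_trans ?_ (mul_le_mul_of_nonneg_left h1 hn)
    have e1 : (N⁻¹ - (N ^ 2)⁻¹) * (Real.exp (-(t / (N - 3))) * (N - 2)) =
      (1 - 1 / N) * ((1 - 2 / N) * Real.exp (-(t / (N - 3)))) := by field_simp
    rw [e1]
    have a1 := vg_exp_low (1 / N) (by positivity) (by rw [div_lt_one (by linarith)]; linarith)
    have a2 := vg_exp_low (2 / N) (by positivity) (by rw [div_lt_one (by linarith)]; linarith)
    have n1 : N - 1 ≠ 0 := by linarith
    have n2 : N - 2 ≠ 0 := by linarith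
    have n3 : N - 3 ≠ 0 := by linarith
    have n0 : N ≠ 0 := by linarith
    have b1 : 1 / N / (1 - 1 / N) = 1 / (N - 1) := by
      rw [show 1 - 1 / N = (N - 1) / N by field_simp]; field_simp
    have b2 : 2 / N / (1 - 2 / N) = 2 / (N - 2) := by
      rw [show 1 - 2 / N = (N - 2) / N by field_simp]; field_simp
    rw [b1] at a1
    rw [b2] at a2
    have c1 : Real.exp (-(1 / (N - 1))) * (Real.exp (-(2 / (N - 2))) * Real.exp (-(t / (N - 3)))) ≤
        (1 - 1 / N) * ((1 - 2 / N) * Real.exp (-(t / (N - 3)))) := by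
      have := Real.exp_pos (-(1 / (N - 1)))
      have := Real.exp_pos (-(2 / (N - 2)))
      gcongr
      linarith
    refine le_trans ?_ c1
    rw [← Real.exp_nat_mul, ← Real.exp_add, ← Real.exp_add, ← Real.exp_add, Real.exp_le_exp]
    have d1 : 1 / (N - 1) ≤ 1 / (N - 3) := one_div_le_one_div_of_le (by linarith) (by linarith)
    have d2 : 2 / (N - 2) ≤ 2 / (N - 3) :=
      div_le_div_of_nonneg_left (by norm_num) (by linarith) (by linarith)
    have ht : (t : ℝ) = 2 * N * β := by rw [hβ]; field_simp
    have d3 : (t : ℝ) / (N - 3) = 2 * β + 6 * β / (N - 3) := by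
      rw [ht]; field_simp; ring
    have d4 : (3 + 6 * β) / (N - 3) = 1 / (N - 3) + 2 / (N - 3) + 6 * β / (N - 3) := by
      rw [← add_div, ← add_div]; ring
    push_cast
    linarith

set_option maxHeartbeats 1600000 in
lemma vg_final (G : SimpleGraph V) (hG : G.Connected) (d : ℕ)
    (hdeg : ∀ v, ((univ : Finset V).filter fun w => G.Adj v w).card = d) (ε ρ : ℝ) (hρ : 0 < ρ)
    (hP3 : PropP3 G d ε ρ) (hε0 : 0 < ε) (hε1 : ε < 1) (N D c₁ c5 C θ : ℝ)
    (hNdef : N = (Fintype.card V : ℝ)) (hDdef : D = (d : ℝ)) (hc₁ : 0 < c₁)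
    (hgap : SpectralGapLB G d (c₁ / D ^ 3)) (hN : 8 ≤ N) (hD4 : D ^ 4 ≤ N) (hD2 : 2 ≤ D)
    (h5 : D ^ 5 * Real.log N ≤ c5 * N) (hc₁D : c₁ ≤ D ^ 3) (h10 : 10 ≤ D ^ ε)
    (hk : 200 * ρ ≤ D ^ (ε / 4)) (ha : 8 * (8 * c5 / c₁ + 2) < (D ^ ε) ^ 2)
    (hC : C = 16 + 2 * (10 * ρ + 1) ^ 10 / c₁)
    (hθdef : θ = (4 + (16 * C + 6) * Real.log D) / D) (hθ : θ ≤ 1 / 4) (u : V) :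
    1 - 4 * (Real.exp (3 * θ) * (1 + 4 * D ^ 2 / N) - 1) - 1 / D ^ (ε / 4) ≤
      walkProb (lazyStep G d) u (Nat.floor (2 * ((1 - ε) * (N * Real.log D))))
        (fun p => bigVacantComponent G p 1 (Real.exp (1 / 2 * D ^ (ε / 2)))) := by
  have hD0 : 0 < D := by linarith
  have hd : 0 < d := by
    have : (0 : ℝ) < d := hDdef ▸ hD0
    exact_mod_cast this
  have hN0 : 0 < N := by linarith
  have hN8 : 8 ≤ Fintype.card V := by
    rw [hNdef] at hN; exact_mod_cast hN
  have hlogD : 0 ≤ Real.log D := Real.log_nonneg (by linarith)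
  have hlogN : 0 ≤ Real.log N := Real.log_nonneg (by linarith)
  have hC16 : 16 ≤ C := by
    rw [hC]; have : 0 < 2 * (10 * ρ + 1) ^ 10 / c₁ := by positivity
    linarith
  have hCc : 2 * (10 * ρ + 1) ^ 10 / c₁ ≤ C := by rw [hC]; linarith
  set g := c₁ / D ^ 3 with hg
  have hg0 : 0 < g := by positivity
  have hg1 : g ≤ 1 := by rw [hg, div_le_one (by positivity)]; exact hc₁D
  set t := Nat.floor (2 * ((1 - ε) * (N * Real.log D))) with ht
  set T := Nat.ceil (4 * Real.log N / g) with hTdef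
  set β := (t : ℝ) / (2 * N) with hβ
  have hβ0 : 0 ≤ β := by positivity
  have hβ1 : β ≤ (1 - ε) * Real.log D := by
    have h0 : 0 ≤ 2 * ((1 - ε) * (N * Real.log D)) := by
      have : 0 ≤ 1 - ε := by linarith
      positivity
    have := Nat.floor_le h0
    rw [hβ, div_le_iff₀ (by positivity)]
    linarith
  have hβL : β ≤ Real.log D := by nlinarith
  have hT : (1 - g) ^ T ≤ (N ^ 4)⁻¹ := by
    have h1 : 1 - g ≤ Real.exp (-g) := by
      have := Real.add_one_le_exp (-g); linarith
    refine (pow_le_pow_left₀ (by linarith) h1 T).trans ?_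
    rw [← Real.exp_nat_mul]
    have h2 : 4 * Real.log N / g ≤ T := Nat.le_ceil _
    rw [div_le_iff₀ hg0] at h2
    have h3 : (N ^ 4)⁻¹ = Real.exp (-(4 * Real.log N)) := by
      rw [Real.exp_neg, show 4 * Real.log N = (4 : ℕ) * Real.log N by norm_num, Real.exp_nat_mul,
        Real.exp_log hN0]
    rw [h3, Real.exp_le_exp]
    linarith
  have hTle : (T : ℝ) ≤ 4 * Real.log N / g + 1 := (Nat.ceil_lt_add_one (by positivity)).le
  have hD4' : 8 * D ≤ D ^ 4 := by
    have : 8 ≤ D ^ 3 := by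
      have := pow_le_pow_left₀ (by norm_num) hD2 3
      linarith
    nlinarith
  have hND : D + 3 ≤ N := by linarith
  have hpow1 : 1 ≤ (10 * ρ + 1) ^ 10 := one_le_pow₀ (by linarith)
  have hb := vg_bounds G hG d hd hdeg ε ρ hρ hP3 (hDdef ▸ h10) g hg0 hg1 hgap (C / D)
    (by rw [← hDdef]; gcongr)
    (by
      rw [← hNdef, hg, div_le_div_iff₀ (by positivity) hD0]
      have e : C * (c₁ / D ^ 3 * N) = (C * c₁) * (N / D ^ 3) := by ring
      rw [e]
      have h1 : 2 ≤ C * c₁ := by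
        rw [div_le_iff₀ hc₁] at hCc
        linarith
      have h2 : D ≤ N / D ^ 3 := by
        rw [le_div_iff₀ (by positivity)]
        linarith [show D * D ^ 3 = D ^ 4 by ring]
      nlinarith)
    (by
      rw [← hDdef, hg]
      have e : 2 * ((10 * ρ + 1) ^ 10 * (D ^ 5)⁻¹) / (c₁ / D ^ 3) =
        (2 * (10 * ρ + 1) ^ 10 / c₁) / D ^ 2 := by field_simp
      rw [e, div_pow]
      gcongr
      refine hCc.trans ?_
      nlinarith)
    hN8 t T (hNdef ▸ hT) β θ (by rw [hβ, hNdef])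
    (by
      rw [← hNdef]
      have h1 : 1 / N ≤ 1 / D := one_div_le_one_div_of_le hD0 (by linarith)
      have h2 : 16 * (C / D) * β ≤ 16 * (C / D) * Real.log D := by gcongr
      have h3 : θ = 1 / D + 16 * (C / D) * Real.log D + (3 + 6 * Real.log D) / D := by
        rw [hθdef]; ring
      have h4 : 0 ≤ (3 + 6 * Real.log D) / D := by positivity
      linarith)
    (by
      rw [← hNdef]
      have h1 : (3 + 6 * β) / (N - 3) ≤ (3 + 6 * Real.log D) / D := by
        gcongr
        linarith
      have h3 : θ = 1 / D + 16 * (C / D) * Real.log D + (3 + 6 * Real.log D) / D := by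
        rw [hθdef]; ring
      have h4 : 0 ≤ 1 / D + 16 * (C / D) * Real.log D := by positivity
      linarith) u
  obtain ⟨hup, hlow⟩ := hb
  set P := Real.exp (-β) with hP
  have hP0 : 0 < P := Real.exp_pos _
  have hDP : D ^ ε ≤ D * P := by
    have h1 : D ^ ε = Real.exp (Real.log D * ε) := Real.rpow_def_of_pos hD0 ε
    have h2 : D * P = Real.exp (Real.log D + -β) := by
      rw [Real.exp_add, Real.exp_log hD0]
    rw [h1, h2, Real.exp_le_exp]
    linarith
  set k := D ^ (ε / 4) with hkdef
  have hz : D ^ (ε / 2) = k ^ 2 := by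
    rw [hkdef, ← Real.rpow_natCast, ← Real.rpow_mul hD0.le]; congr 1; push_cast; ring
  have hk4 : D ^ ε = k ^ 4 := by
    rw [hkdef, ← Real.rpow_natCast, ← Real.rpow_mul hD0.le]; congr 1; push_cast; ring
  have hk0 : 0 < k := by positivity
  have hk2 : 2 ≤ k ^ 2 := by
    by_contra hcon
    push Not at hcon
    have : k ^ 4 < 4 := by
      have : k ^ 4 = k ^ 2 * k ^ 2 := by ring
      nlinarith
    rw [hk4] at h10
    linarith
  rw [hz]
  set r := Nat.floor (k ^ 2) with hr
  have hr1 : (r : ℝ) ≤ k ^ 2 := Nat.floor_le (by positivity)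
  have hr2 : k ^ 2 - 1 ≤ r := (Nat.sub_one_lt_floor _).le
  have hB := vg_simple_stoch G d hd hdeg
  have hM := vg_lazy_stoch G d hB
  have hexp1 : Real.exp θ ≤ 2 := by
    have h1 : Real.exp θ ≤ Real.exp (1 / 4) := Real.exp_le_exp.mpr hθ
    have h2 : Real.exp (1 / 4) ≤ 2 := by
      have := vg_exp_low (1 / 2) (by norm_num) (by norm_num)
      have h3 : Real.exp (-1) ≤ 1 / 2 := by
        have e : -((1 : ℝ) / 2 / (1 - 1 / 2)) = -1 := by norm_num
        rw [e] at this; linarith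
      have h4 := vg_exp_low (1 / 4) (by norm_num) (by norm_num)
      have h5 := Real.add_one_le_exp (-(1 / 4 : ℝ))
      have h6 : Real.exp (1 / 4 : ℝ) * Real.exp (-(1 / 4 : ℝ)) = 1 := by
        rw [← Real.exp_add]; simp
      have := Real.exp_pos (1 / 4 : ℝ)
      nlinarith
    linarith
  have hexp2 : 1 / 2 ≤ Real.exp (-θ) := by
    have h5 := Real.add_one_le_exp (-θ)
    linarith
  have hmain := vg_main G hG d hd hdeg ε ρ hρ hP3 r
    (by rw [← hDdef, hk4]; nlinarith) (Real.exp (1 / 2 * k ^ 2))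
    (by
      have h1 : Real.exp (1 / 2 * k ^ 2) ≤ Real.exp (r * 1) := by
        rw [Real.exp_le_exp]; linarith
      refine h1.trans ?_
      rw [Real.exp_nat_mul]
      refine pow_le_pow_left₀ (Real.exp_pos _).le ?_ r
      exact Real.exp_one_lt_three.le)
    (lazyStep G d) hM u t T (Real.exp (-θ) * P ^ 2) (Real.exp θ * P) (Real.exp θ * P ^ 2)
    (Real.exp θ * P ^ 4) k (by positivity) hk0 (by positivity) (by positivity) (by positivity)
    hlow
    (fun S hS => by
      have := hup S (Finset.card_pos.mp (by omega)) (by omega)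
      rwa [hS, pow_one] at this)
    (fun S hS => by
      have := hup S (Finset.card_pos.mp (by omega)) (by omega)
      rwa [hS] at this)
    (fun S hS => by
      have := hup S (Finset.card_pos.mp (by omega)) (by omega)
      rwa [hS] at this)
    (by
      rw [← hNdef, ← hDdef]
      have hrhs : N * D * P ^ 2 / 4 ≤ N * D * (Real.exp (-θ) * P ^ 2) / 2 := by
        have : 0 < N * D * P ^ 2 := by positivity
        nlinarith
      refine lt_of_lt_of_le ?_ hrhs
      have hfirst : 2 * (4 * ρ * r) * (k * (N * (Real.exp θ * P))) ≤ N * D * P ^ 2 / 8 := by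
        have h1 : 2 * (4 * ρ * r) * (k * (N * (Real.exp θ * P))) ≤
            2 * (4 * ρ * k ^ 2) * (k * (N * (2 * P))) := by gcongr
        refine h1.trans ?_
        have h2 : N * D * P ^ 2 / 8 = N * P * (D * P) / 8 := by ring
        have h3 : N * P * k ^ 4 / 8 ≤ N * P * (D * P) / 8 := by
          rw [hk4] at hDP; gcongr
        rw [h2]
        refine le_trans ?_ h3
        have h4 : 2 * (4 * ρ * k ^ 2) * (k * (N * (2 * P))) = N * P * k ^ 3 * (16 * ρ) := by ring
        have h5 : N * P * k ^ 4 / 8 = N * P * k ^ 3 * (k / 8) := by ring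
        rw [h4, h5]
        gcongr
        linarith
      have hsecond : 2 * (T : ℝ) * D < N * D * P ^ 2 / 8 := by
        have h1 : 2 * (T : ℝ) * D ≤ 2 * (4 * Real.log N / g + 1) * D := by gcongr
        have h2 : 2 * (4 * Real.log N / g + 1) * D = (8 / c₁) * (D ^ 5 * Real.log N) / D + 2 * D := by
          rw [hg]; field_simp; ring
        have h3 : (8 / c₁) * (D ^ 5 * Real.log N) / D ≤ (8 / c₁) * (c5 * N) / D := by gcongr
        have h4 : 2 * D ≤ 2 * N / D := by
          rw [le_div_iff₀ hD0]
          have : D ^ 2 ≤ D ^ 4 := pow_le_pow_right₀ (by linarith) (by norm_num)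
          nlinarith
        have h5 : (8 / c₁) * (c5 * N) / D + 2 * N / D = (8 * c5 / c₁ + 2) * (N / D) := by ring
        have h6 : N * D * P ^ 2 / 8 = (D * P) ^ 2 / 8 * (N / D) := by field_simp
        have h7 : (D ^ ε) ^ 2 ≤ (D * P) ^ 2 := by gcongr
        rw [h6]
        have h8 : 0 < N / D := by positivity
        have h9 : (8 * c5 / c₁ + 2) * (N / D) < (D * P) ^ 2 / 8 * (N / D) := by
          apply mul_lt_mul_of_pos_right _ h8
          linarith
        linarith
      linarith)
  refine le_trans ?_ hmain
  rw [← hNdef]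
  have e1 : Real.exp θ * P ^ 4 / (Real.exp (-θ) * P ^ 2) ^ 2 = Real.exp (3 * θ) := by
    rw [show 3 * θ = θ + θ + θ by ring, Real.exp_add, Real.exp_add, Real.exp_neg]
    have := Real.exp_pos θ
    field_simp
  have e2 : 4 * (Real.exp θ * P ^ 2) / (N * (Real.exp (-θ) * P ^ 2) ^ 2) =
      Real.exp (3 * θ) * (4 * (1 / P ^ 2) / N) := by
    rw [show 3 * θ = θ + θ + θ by ring, Real.exp_add, Real.exp_add, Real.exp_neg]
    have := Real.exp_pos θ
    field_simp
  rw [e1, e2]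
  have h1 : 1 / P ^ 2 ≤ D ^ 2 := by
    rw [div_le_iff₀ (by positivity), ← mul_pow]
    have : 1 ≤ D * P := by linarith
    exact one_le_pow₀ this
  have h2 : Real.exp (3 * θ) * (4 * (1 / P ^ 2) / N) ≤ Real.exp (3 * θ) * (4 * D ^ 2 / N) := by
    gcongr
  have h3 : Real.exp (3 * θ) * (1 + 4 * D ^ 2 / N) =
    Real.exp (3 * θ) + Real.exp (3 * θ) * (4 * D ^ 2 / N) := by ring
  linarith

/-- **Lemma 8**: with `t₋ = (1-ε) n ln d`, for a sequence of connected
`d`-regular graphs satisfying P1–P4, w.h.p. the set of vertices unvisited by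
the lazy walk during `[1, 2t₋]` induces a connected component with at least
`exp(c·d^(ε/2))` vertices.  (The `n`-th graph has `n + 1` vertices.) -/
theorem lazy_vacant_giant_component
    (G : ∀ n : ℕ, SimpleGraph (Fin (n + 1))) (d : ℕ → ℕ) (ε : ℕ → ℝ)
    (u : ∀ n : ℕ, Fin (n + 1))
    (hreg : ∀ n, (G n).IsRegularOfDegree (d n))
    (hconn : ∀ n, (G n).Connected)
    (hd : Tendsto (fun n => (d n : ℝ)) atTop atTop)
    (hε : ∀ n, 0 < ε n ∧ ε n < 1)
    (hεd : Tendsto (fun n => ε n * Real.log (d n)) atTop atTop)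
    (hP1 : ∃ c₁ ρ₁ : ℝ, 0 < c₁ ∧ 0 < ρ₁ ∧ ρ₁ ≤ 3 ∧
      ∀ n, SpectralGapLB (G n) (d n) (c₁ / (d n : ℝ) ^ ρ₁))
    (hP2a : Tendsto (fun n : ℕ => Real.log (Real.log ((n : ℝ) + 1)) ^ (2 / ε n) / (d n : ℝ))
      atTop (nhds 0))
    (hP2b : ∃ c₂ : ℝ, 0 < c₂ ∧ ∀ n, 1 ≤ n →
      (d n : ℝ) ≤ c₂ * (((n : ℝ) + 1) / Real.log ((n : ℝ) + 1)) ^ ((1 : ℝ) / 5))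
    (hP3 : ∃ ρ₂ : ℝ, 0 < ρ₂ ∧ ∀ n, PropP3 (G n) (d n) (ε n) ρ₂)
    (hP4 : ∀ δ : ℝ, 0 < δ → ∃ δ' : ℝ, 0 < δ' ∧ ∃ n₀ : ℕ, ∀ n, n₀ ≤ n →
      ∀ S : Finset (Fin (n + 1)), (S.card : ℝ) ≤ δ' * Real.log ((n : ℝ) + 1) →
        (edgesInside (G n) S : ℝ) ≤ δ * (d n : ℝ) * (S.card : ℝ)) :
    ∃ c : ℝ, 0 < c ∧
      Tendsto (fun n =>
        walkProb (lazyStep (G n) (d n)) (u n)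
          (Nat.floor (2 * ((1 - ε n) * (((n : ℝ) + 1) * Real.log (d n)))))
          (fun p => bigVacantComponent (G n) p 1 (Real.exp (c * (d n : ℝ) ^ (ε n / 2)))))
        atTop (nhds 1) := by
  obtain ⟨c₁, ρ₁, hc₁, hρ₁, hρ₁3, hgap⟩ := hP1
  obtain ⟨c₂, hc₂, hP2⟩ := hP2b
  obtain ⟨ρ, hρ, hP3⟩ := hP3
  refine ⟨1 / 2, by norm_num, ?_⟩
  set C : ℝ := 16 + 2 * (10 * ρ + 1) ^ 10 / c₁ with hC
  set θ : ℕ → ℝ := fun n => (4 + (16 * C + 6) * Real.log (d n : ℝ)) / (d n : ℝ) with hθ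
  have hd0 : ∀ᶠ n in atTop, (2 : ℝ) ≤ d n := hd.eventually_ge_atTop 2
  have hNt : Tendsto (fun n : ℕ => (n : ℝ) + 1) atTop atTop :=
    tendsto_atTop_add_const_right _ _ tendsto_natCast_atTop_atTop
  -- powers of d
  have hpow : ∀ a : ℝ, 0 < a → Tendsto (fun n => (d n : ℝ) ^ (ε n * a)) atTop atTop := by
    intro a ha
    have h1 : Tendsto (fun n => Real.exp (ε n * Real.log (d n) * a)) atTop atTop :=
      Real.tendsto_exp_atTop.comp (hεd.atTop_mul_const ha)
    refine h1.congr' ?_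
    filter_upwards [hd0] with n hn
    rw [Real.rpow_def_of_pos (by linarith)]
    congr 1; ring
  have hpow1 : Tendsto (fun n => (d n : ℝ) ^ (ε n)) atTop atTop := by
    simpa using hpow 1 one_pos
  have hpow4 : Tendsto (fun n => (d n : ℝ) ^ (ε n / 4)) atTop atTop := by
    have := hpow (1 / 4) (by norm_num)
    simpa [div_eq_mul_inv] using this
  have hθ0 : Tendsto θ atTop (nhds 0) := by
    have h1 : Tendsto (fun n => (d n : ℝ)⁻¹) atTop (nhds 0) := tendsto_inv_atTop_zero.comp hd
    have h2 : Tendsto (fun n => Real.log (d n : ℝ) / (d n : ℝ)) atTop (nhds 0) := by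
      have := Real.isLittleO_log_id_atTop.tendsto_div_nhds_zero
      exact this.comp hd
    have h3 := (h1.const_mul 4).add (h2.const_mul (16 * C + 6))
    simp only [mul_zero, add_zero] at h3
    refine h3.congr fun n => ?_
    simp only [hθ]; ring
  have h5 : ∀ᶠ n in atTop, (d n : ℝ) ^ 5 * Real.log ((n : ℝ) + 1) ≤ c₂ ^ 5 * ((n : ℝ) + 1) := by
    filter_upwards [eventually_ge_atTop 1] with n hn
    have h1 := hP2 n hn
    have hn1 : (1 : ℝ) ≤ n := by exact_mod_cast hn
    have hlog : 0 < Real.log ((n : ℝ) + 1) := Real.log_pos (by linarith)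
    have h2 := pow_le_pow_left₀ (by positivity) h1 5
    have h3 : ((((n : ℝ) + 1) / Real.log ((n : ℝ) + 1)) ^ ((1 : ℝ) / 5)) ^ 5 =
        ((n : ℝ) + 1) / Real.log ((n : ℝ) + 1) := by
      rw [← Real.rpow_natCast, ← Real.rpow_mul (by positivity)]
      norm_num
    rw [mul_pow, h3, ← mul_div_assoc, le_div_iff₀ hlog] at h2
    exact h2
  have hD4 : ∀ᶠ n in atTop, (d n : ℝ) ^ 4 ≤ (n : ℝ) + 1 := by
    filter_upwards [h5, hd0, hd.eventually_ge_atTop (c₂ ^ 5),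
      (Real.tendsto_log_atTop.comp hNt).eventually_ge_atTop 1] with n h1 h2 h3 h4
    simp only [Function.comp] at h4
    have hD0 : (0 : ℝ) < d n := by linarith
    have h6 : (d n : ℝ) ^ 5 ≤ (d n : ℝ) * ((n : ℝ) + 1) := by
      calc (d n : ℝ) ^ 5 ≤ (d n : ℝ) ^ 5 * Real.log ((n : ℝ) + 1) :=
            le_mul_of_one_le_right (by positivity) h4
        _ ≤ c₂ ^ 5 * ((n : ℝ) + 1) := h1
        _ ≤ _ := by gcongr
    have h7 : (d n : ℝ) ^ 5 = (d n : ℝ) * (d n : ℝ) ^ 4 := by ring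
    rw [h7] at h6
    exact le_of_mul_le_mul_left h6 hD0
  have hratio : Tendsto (fun n : ℕ => (d n : ℝ) ^ 2 / ((n : ℝ) + 1)) atTop (nhds 0) := by
    have h1 : Tendsto (fun n => ((d n : ℝ)⁻¹)) atTop (nhds 0) := tendsto_inv_atTop_zero.comp hd
    refine tendsto_of_tendsto_of_tendsto_of_le_of_le' tendsto_const_nhds h1 ?_ ?_
    · exact Eventually.of_forall fun n => by positivity
    · filter_upwards [hD4, hd0] with n h2 h3
      have hD0 : (0 : ℝ) < d n := by linarith
      rw [div_le_iff₀ (by positivity), inv_mul_eq_div, le_div_iff₀ hD0]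
      have : (d n : ℝ) ^ 3 ≤ (d n : ℝ) ^ 4 := pow_le_pow_right₀ (by linarith) (by norm_num)
      nlinarith
  have hlower : Tendsto (fun n : ℕ =>
      1 - 4 * (Real.exp (3 * θ n) * (1 + 4 * (d n : ℝ) ^ 2 / ((n : ℝ) + 1)) - 1) -
        1 / (d n : ℝ) ^ (ε n / 4)) atTop (nhds 1) := by
    have e1 : Tendsto (fun n => Real.exp (3 * θ n)) atTop (nhds 1) := by
      have := (Real.continuous_exp.tendsto (3 * 0)).comp (hθ0.const_mul 3)
      simpa [Function.comp_def] using this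
    have e2 : Tendsto (fun n : ℕ => 1 + 4 * (d n : ℝ) ^ 2 / ((n : ℝ) + 1)) atTop (nhds 1) := by
      have := (hratio.const_mul 4).const_add 1
      simp only [mul_zero, add_zero] at this
      refine this.congr fun n => ?_
      ring
    have e3 : Tendsto (fun n => 1 / (d n : ℝ) ^ (ε n / 4)) atTop (nhds 0) := by
      have := tendsto_inv_atTop_zero.comp hpow4
      refine this.congr fun n => ?_
      simp
    have := ((((e1.mul e2).sub_const 1).const_mul 4).const_sub 1).sub e3
    simpa using this
  have hdeg : ∀ n v, ((univ : Finset (Fin (n + 1))).filter fun w => (G n).Adj v w).card = d n := by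
    intro n v
    rw [← hreg n v, ← SimpleGraph.card_neighborFinset_eq_degree]
    congr 1
    ext w
    simp
  have hd3 : Tendsto (fun n => (d n : ℝ) ^ 3) atTop atTop :=
    (tendsto_pow_atTop (by norm_num)).comp hd
  have hpow1s : Tendsto (fun n => ((d n : ℝ) ^ (ε n)) ^ 2) atTop atTop :=
    (tendsto_pow_atTop (by norm_num)).comp hpow1
  refine tendsto_of_tendsto_of_tendsto_of_le_of_le' hlower tendsto_const_nhds ?_ ?_
  · filter_upwards [hd0, h5, hD4, hNt.eventually_ge_atTop 8, hd3.eventually_ge_atTop c₁,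
      hpow1.eventually_ge_atTop 10, hpow4.eventually_ge_atTop (200 * ρ),
      hpow1s.eventually_gt_atTop (8 * (8 * c₂ ^ 5 / c₁ + 2)),
      hθ0.eventually_le_const (show (0 : ℝ) < 1 / 4 by norm_num)] with
      n g1 g2 g3 g4 g5 g6 g7 g8 g9
    refine vg_final (G n) (hconn n) (d n) (hdeg n) (ε n) ρ hρ (hP3 n) (hε n).1 (hε n).2
      ((n : ℝ) + 1) (d n : ℝ) c₁ (c₂ ^ 5) C (θ n) (by simp) rfl hc₁ ?_ g4 g3 g1 g2 g5 g6 g7 g8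
      hC rfl g9 (u n)
    intro x hx
    refine (hgap n x hx).trans ?_
    refine mul_le_mul_of_nonneg_right ?_ (Finset.sum_nonneg fun v _ => sq_nonneg _)
    have hle : (d n : ℝ) ^ ρ₁ ≤ (d n : ℝ) ^ 3 := by
      rw [← Real.rpow_natCast]
      exact Real.rpow_le_rpow_of_exponent_le (by linarith) (by push_cast; exact hρ₁3)
    have hpos : 0 < (d n : ℝ) ^ ρ₁ := Real.rpow_pos_of_pos (by linarith) _
    have := div_le_div_of_nonneg_left hc₁.le hpos hle
    linarith
  · filter_upwards [hd0] with n hn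
    have hd' : 0 < d n := by
      have : (0 : ℝ) < d n := by linarith
      exact_mod_cast this
    exact vg_walk_le_one _ (vg_lazy_stoch (G n) (d n) (vg_simple_stoch (G n) (d n) hd' (hdeg n))) _ _ _

end
end
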